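/- arXiv:0812.0372 — 2 statements merged into one kernel-verified Lean document; each statement's English description precedes it below -/
import Mathlib

section
/- Let q ≥ 4 be an integer and d = q³ + 2q² − q − 8. Let A and B be nonempty disjoint finite sets and let H be a connected simple graph on the vertex set A ∪ B; let 𝒢 denote the induced subgraph H[B], and for v ∈ B let d_A(v) denote the number of neighbors of v in H that lie in A. Assume: (1) no two vertices of A are adjacent in H; (2) every vertex of A has degree at least d in H; (3) for every v ∈ B, deg_𝒢(v) + ⌈d_A(v)/q⌉ ≤ d. Then 𝒢 admits a proper coloring with d colors such that every vertex of A has at least q distinct colors among its neighbors in B. -/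
/-- Independence of two sets of bit strings depending on disjoint sets of coordinates. -/
theorem card_inter_mul_card_of_disjoint_support {ι : Type*} [Fintype ι] [DecidableEq ι]
    (X Y : Finset (ι → Bool)) (D : Finset ι)
    (hX : ∀ ω ω', (∀ x ∈ D, ω x = ω' x) → ω ∈ X → ω' ∈ X)
    (hY : ∀ ω ω', (∀ x ∉ D, ω x = ω' x) → ω ∈ Y → ω' ∈ Y) :
    (X ∩ Y).card * Fintype.card (ι → Bool) = X.card * Y.card := by
  rw [← Finset.card_univ, ← Finset.card_product, ← Finset.card_product]
  let mix : (ι → Bool) → (ι → Bool) → ι → Bool := fun ω ω' x => if x ∈ D then ω x else ω' x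
  refine Finset.card_nbij' (fun p => (mix p.1 p.2, mix p.2 p.1))
    (fun p => (mix p.1 p.2, mix p.2 p.1)) ?_ ?_ ?_ ?_
  · rintro ⟨ω, ω'⟩ h
    simp only [Finset.coe_product, Finset.coe_inter, Finset.coe_univ, Set.mem_prod,
      Set.mem_inter_iff, Finset.mem_coe, Set.mem_univ, and_true] at h ⊢
    refine ⟨hX _ _ ?_ h.1, hY _ _ ?_ h.2⟩ <;> intro x hx <;> simp [mix, hx]
  · rintro ⟨ω, ω'⟩ h
    simp only [Finset.coe_product, Finset.coe_inter, Finset.coe_univ, Set.mem_prod,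
      Set.mem_inter_iff, Finset.mem_coe, Set.mem_univ, and_true] at h ⊢
    refine ⟨hX _ _ ?_ h.1, hY _ _ ?_ h.2⟩ <;> intro x hx <;> simp [mix, hx]
  · rintro ⟨ω, ω'⟩ -
    ext x <;> by_cases hx : x ∈ D <;> simp [mix, hx]
  · rintro ⟨ω, ω'⟩ -
    ext x <;> by_cases hx : x ∈ D <;> simp [mix, hx]

/-- A form of the Lovász local lemma for events on uniformly random bit strings. -/
theorem exists_forall_notMem_of_sum_le {ι I : Type*} [Fintype ι] [DecidableEq ι] [Fintype I]
    [DecidableEq I] (E : I → Finset (ι → Bool)) (D : I → Finset ι) (p : I → ℝ)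
    (hE : ∀ i ω ω', (∀ x ∈ D i, ω x = ω' x) → ω ∈ E i → ω' ∈ E i)
    (hcard : ∀ i, ((E i).card : ℝ) ≤ p i * Fintype.card (ι → Bool))
    (hp : ∀ i, p i ≤ 1 / 4)
    (hsum : ∀ i, ∑ j with ¬ Disjoint (D i) (D j), p j ≤ 1 / 4) :
    ∃ ω, ∀ i, ω ∉ E i := by
  let av : Finset I → Finset (ι → Bool) := fun T => Finset.univ.filter fun ω => ∀ j ∈ T, ω ∉ E j
  have hNpos : (0 : ℝ) < Fintype.card (ι → Bool) := by
    exact_mod_cast Fintype.card_pos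
  have hp0 : ∀ i, 0 ≤ p i := fun i => by
    by_contra h
    have h1 : p i * Fintype.card (ι → Bool) < 0 := mul_neg_of_neg_of_pos (by linarith) hNpos
    have h2 : (0 : ℝ) ≤ (E i).card := Nat.cast_nonneg _
    linarith [hcard i]
  have key : ∀ n, ∀ T : Finset I, T.card = n → ∀ i,
      ((E i ∩ av T).card : ℝ) ≤ 2 * p i * (av T).card := by
    intro n
    induction n using Nat.strong_induction_on with
    | _ n ih =>
      intro T hT i
      set T₁ := T.filter fun j => ¬ Disjoint (D i) (D j) with hT₁
      set T₂ := T.filter fun j => Disjoint (D i) (D j) with hT₂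
      have hindep : ((E i ∩ av T₂).card : ℝ) ≤ p i * (av T₂).card := by
        have h := card_inter_mul_card_of_disjoint_support (E i) (av T₂) (D i) (hE i) (by
          intro ω ω' h hω
          simp only [av, Finset.mem_filter, Finset.mem_univ, true_and] at hω ⊢
          intro j hj hj'
          refine hω j hj (hE j _ _ (fun x hx => (h x ?_).symm) hj')
          exact fun hx' => (Finset.disjoint_left.mp (Finset.mem_filter.mp hj).2) hx' hx)
        have h' : ((E i ∩ av T₂).card : ℝ) * Fintype.card (ι → Bool)
            = (E i).card * (av T₂).card := by exact_mod_cast h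
        have h3 : ((E i).card : ℝ) * (av T₂).card
            ≤ p i * Fintype.card (ι → Bool) * (av T₂).card :=
          mul_le_mul_of_nonneg_right (hcard i) (by positivity)
        refine le_of_mul_le_mul_right ?_ hNpos
        linarith
      have hmono : av T ⊆ av T₂ := by
        intro ω hω
        simp only [av, Finset.mem_filter, Finset.mem_univ, true_and] at hω ⊢
        exact fun j hj => hω j (Finset.mem_filter.mp hj).1
      have hhalf : ((av T₂).card : ℝ) ≤ 2 * (av T).card := by
        rcases T₁.eq_empty_or_nonempty with h0 | hne
        · have : T = T₂ := by
            rw [hT₂, Finset.filter_true_of_mem]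
            intro j hj
            by_contra hd
            have : j ∈ T₁ := Finset.mem_filter.mpr ⟨hj, hd⟩
            rw [h0] at this
            exact absurd this (Finset.notMem_empty _)
          rw [← this]
          have : (0 : ℝ) ≤ (av T).card := Nat.cast_nonneg _
          linarith
        · have hlt : T₂.card < n := by
            rw [← hT]
            refine Finset.card_lt_card ⟨Finset.filter_subset _ _, fun hsub => ?_⟩
            obtain ⟨j, hj⟩ := hne
            have hj' := Finset.mem_filter.mp hj
            exact hj'.2 (Finset.mem_filter.mp (hsub hj'.1)).2
          have hsub : av T₂ ⊆ av T ∪ T₁.biUnion fun j => E j ∩ av T₂ := by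
            intro ω hω
            by_cases h : ω ∈ av T
            · exact Finset.mem_union_left _ h
            · refine Finset.mem_union_right _ ?_
              have h' : ∃ j ∈ T, ω ∈ E j := by
                simpa [av] using h
              obtain ⟨j, hj, hjE⟩ := h'
              refine Finset.mem_biUnion.mpr ⟨j, ?_, Finset.mem_inter.mpr ⟨hjE, hω⟩⟩
              refine Finset.mem_filter.mpr ⟨hj, fun hd => ?_⟩
              simp only [av, Finset.mem_filter, Finset.mem_univ, true_and] at hω
              exact hω j (Finset.mem_filter.mpr ⟨hj, hd⟩) hjE
          have h1 : ((av T₂).card : ℝ) ≤ (av T).card + ∑ j ∈ T₁, ((E j ∩ av T₂).card : ℝ) := by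
            have := (Finset.card_le_card hsub).trans (Finset.card_union_le _ _)
            have h2 := this.trans (Nat.add_le_add_left Finset.card_biUnion_le _)
            exact_mod_cast h2
          have h2 : ∑ j ∈ T₁, ((E j ∩ av T₂).card : ℝ) ≤ ∑ j ∈ T₁, 2 * p j * (av T₂).card :=
            Finset.sum_le_sum fun j _ => ih _ hlt T₂ rfl j
          have h3 : ∑ j ∈ T₁, p j ≤ 1 / 4 := by
            refine le_trans (Finset.sum_le_sum_of_subset_of_nonneg ?_ fun j _ _ => hp0 j) (hsum i)
            intro j hj
            exact Finset.mem_filter.mpr ⟨Finset.mem_univ _, (Finset.mem_filter.mp hj).2⟩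
          have h4 : ∑ j ∈ T₁, 2 * p j * ((av T₂).card : ℝ)
              = 2 * (∑ j ∈ T₁, p j) * (av T₂).card := by
            rw [Finset.mul_sum, Finset.sum_mul]
          have h5 : (0 : ℝ) ≤ (av T₂).card := Nat.cast_nonneg _
          nlinarith
      have h1 : ((E i ∩ av T).card : ℝ) ≤ (E i ∩ av T₂).card := by
        exact_mod_cast Finset.card_le_card (Finset.inter_subset_inter_left hmono)
      nlinarith [hp0 i]
  have hpos : ∀ T : Finset I, 0 < (av T).card := by
    intro T
    induction T using Finset.induction_on with
    | empty => simp [av]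
    | insert i T hi ih =>
      have hsub : av T ⊆ av (insert i T) ∪ (E i ∩ av T) := by
        intro ω hω
        by_cases h : ω ∈ E i
        · exact Finset.mem_union_right _ (Finset.mem_inter.mpr ⟨h, hω⟩)
        · refine Finset.mem_union_left _ ?_
          simp only [av, Finset.mem_filter, Finset.mem_univ, true_and] at hω ⊢
          intro j hj
          rcases Finset.mem_insert.mp hj with rfl | hj
          · exact h
          · exact hω j hj
      have h1 : ((av T).card : ℝ) ≤ (av (insert i T)).card + (E i ∩ av T).card := by
        exact_mod_cast (Finset.card_le_card hsub).trans (Finset.card_union_le _ _)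
      have h2 := key _ T rfl i
      have h3 : (0 : ℝ) < (av T).card := by exact_mod_cast ih
      have h4 : (0 : ℝ) < (av (insert i T)).card := by nlinarith [hp i]
      exact_mod_cast h4
  obtain ⟨ω, hω⟩ := Finset.card_pos.mp (hpos Finset.univ)
  refine ⟨ω, fun i => ?_⟩
  simp only [av, Finset.mem_filter, Finset.mem_univ, true_and] at hω
  exact hω i trivial

/-- If the signed coins `(ρ v, σ v)` are distinct and the factors `φ v` are all monotone in the
same direction, then the expected product is at most the product of the expectations. -/
theorem sum_prod_signed_coin_le {V : Type*} [Fintype V] [DecidableEq V] (ρ : V → V) (σ : V → Bool)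
    (hinj : ∀ v w, ρ v = ρ w → σ v = σ w → v = w) (S : Finset V) (φ : V → Bool → ℝ)
    (hφ : ∀ v ∈ S, ∀ b, 0 ≤ φ v b)
    (hmono : ∀ v ∈ S, ∀ w ∈ S, 0 ≤ (φ v true - φ v false) * (φ w true - φ w false)) :
    ∑ ω : V → Bool, ∏ v ∈ S, φ v (xor (ω (ρ v)) (σ v))
      ≤ (∏ v ∈ S, (φ v true + φ v false) / 2) * Fintype.card (V → Bool) := by
  have h1 : ∀ ω : V → Bool, ∏ v ∈ S, φ v (xor (ω (ρ v)) (σ v))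
      = ∏ x : V, ∏ v ∈ S with ρ v = x, φ v (xor (ω x) (σ v)) := by
    intro ω
    rw [← Finset.prod_fiberwise S ρ]
    refine Finset.prod_congr rfl fun x _ => Finset.prod_congr rfl fun v hv => ?_
    rw [(Finset.mem_filter.mp hv).2]
  have h2 : ∑ ω : V → Bool, ∏ v ∈ S, φ v (xor (ω (ρ v)) (σ v))
      = ∏ x : V, ∑ b : Bool, ∏ v ∈ S with ρ v = x, φ v (xor b (σ v)) := by
    rw [Finset.prod_univ_sum, Fintype.piFinset_univ]
    exact Finset.sum_congr rfl fun ω _ => h1 ω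
  have h3 : (∏ v ∈ S, (φ v true + φ v false) / 2) * (Fintype.card (V → Bool) : ℝ)
      = ∏ x : V, (2 * ∏ v ∈ S with ρ v = x, (φ v true + φ v false) / 2) := by
    rw [Finset.prod_mul_distrib, Finset.prod_fiberwise]
    simp [mul_comm]
  rw [h2, h3]
  refine Finset.prod_le_prod (fun x _ => Finset.sum_nonneg fun b _ => Finset.prod_nonneg
    fun v hv => hφ v (Finset.mem_filter.mp hv).1 _) fun x _ => ?_
  set F := S.filter fun v => ρ v = x with hF
  have hσ : Set.InjOn σ F := by
    intro v hv w hw h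
    exact hinj v w ((Finset.mem_filter.mp hv).2.trans (Finset.mem_filter.mp hw).2.symm) h
  have hcard : F.card ≤ 2 := by
    simpa using Finset.card_le_card_of_injOn σ (fun v _ => Finset.mem_univ _) hσ
  have hFS : ∀ v ∈ F, v ∈ S := fun v hv => (Finset.mem_filter.mp hv).1
  rw [Fintype.sum_bool]
  clear_value F
  interval_cases h : F.card
  · rw [Finset.card_eq_zero] at h
    subst h
    norm_num
  · obtain ⟨v, rfl⟩ := Finset.card_eq_one.mp h
    simp only [Finset.prod_singleton]
    cases σ v <;> simp <;> linarith
  · obtain ⟨v, w, hvw, rfl⟩ := Finset.card_eq_two.mp h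
    have hv := hFS v (by simp)
    have hw := hFS w (by simp)
    have hne : σ v ≠ σ w := fun h' => hvw (hσ (by simp) (by simp) h')
    have hm := hmono v hv w hw
    simp only [Finset.prod_pair hvw]
    clear h1 h2 h3 hmono hφ hinj hF hσ
    cases hv' : σ v <;> cases hw' : σ w <;>
      simp only [hv', hw', ne_eq, not_true_eq_false, Bool.xor_false, Bool.xor_true, Bool.not_true,
        Bool.not_false] at hne ⊢ <;> nlinarith

/-- The failure probabilities of the three kinds of bad events satisfy the local lemma condition. -/
theorem failure_bounds {q d : ℕ} (hq : 4 ≤ q) (hd : d + q + 8 = q ^ 3 + 2 * q ^ 2) :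
    (d : ℝ) * (2 * d * (3 ^ (q ^ 2 - 2) * (2 / 3) ^ (d - (q - 1) ^ 2)
      + (9 / 10) ^ (6 * d - 6 * q ^ 3) + (1 / 2) ^ (d / 2 + 1))) ≤ 1 / 4 := by
  obtain ⟨n, rfl⟩ : ∃ n, q = n + 4 := ⟨q - 4, by omega⟩
  have hd' : d = n ^ 3 + 14 * n ^ 2 + 63 * n + 84 := by nlinarith
  have e1 : (n + 4) ^ 2 - 2 = n ^ 2 + 8 * n + 14 := by
    have : (n + 4) ^ 2 = n ^ 2 + 8 * n + 14 + 2 := by ring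
    omega
  have e2 : d - (n + 4 - 1) ^ 2 = 3 * (n ^ 2 + 8 * n) + (n ^ 3 + 10 * n ^ 2 + 33 * n) + 75 := by
    have : (n + 4 - 1) ^ 2 = n ^ 2 + 6 * n + 9 := by
      rw [show n + 4 - 1 = n + 3 by omega]; ring
    omega
  have e3 : 6 * d - 6 * (n + 4) ^ 3 = 12 * n ^ 2 + 90 * n + 120 := by
    have : (n + 4) ^ 3 = n ^ 3 + 12 * n ^ 2 + 48 * n + 64 := by ring
    omega
  have hdn : (d : ℝ) ≤ 84 * 2 ^ n := by
    have : d ≤ 84 * 2 ^ n := by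
      rw [hd']
      clear * -
      induction n with
      | zero => norm_num
      | succ n ih =>
        calc (n + 1) ^ 3 + 14 * (n + 1) ^ 2 + 63 * (n + 1) + 84
            ≤ 2 * (n ^ 3 + 14 * n ^ 2 + 63 * n + 84) := by ring_nf; nlinarith
          _ ≤ 84 * 2 ^ (n + 1) := by rw [pow_succ 2 n]; linarith
    exact_mod_cast this
  have b1 : (3 : ℝ) ^ ((n + 4) ^ 2 - 2) * (2 / 3) ^ (d - (n + 4 - 1) ^ 2)
      ≤ 3 ^ 14 * (2 / 3) ^ 75 * (1 / 4) ^ n := by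
    rw [e1, e2]
    have h1 : (3 : ℝ) ^ (n ^ 2 + 8 * n) * (2 / 3) ^ (3 * (n ^ 2 + 8 * n)) ≤ 1 := by
      rw [pow_mul, ← mul_pow]
      exact pow_le_one₀ (by norm_num) (by norm_num)
    have h2 : ((2 : ℝ) / 3) ^ (n ^ 3 + 10 * n ^ 2 + 33 * n) ≤ (1 / 4) ^ n :=
      calc ((2 : ℝ) / 3) ^ (n ^ 3 + 10 * n ^ 2 + 33 * n) ≤ (2 / 3) ^ (4 * n) :=
            pow_le_pow_of_le_one (by norm_num) (by norm_num) (by nlinarith)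
        _ ≤ (1 / 4) ^ n := by
            rw [pow_mul]
            exact pow_le_pow_left₀ (by norm_num) (by norm_num) _
    calc (3 : ℝ) ^ (n ^ 2 + 8 * n + 14)
          * (2 / 3) ^ (3 * (n ^ 2 + 8 * n) + (n ^ 3 + 10 * n ^ 2 + 33 * n) + 75)
        = 3 ^ 14 * (2 / 3) ^ 75 * ((3 ^ (n ^ 2 + 8 * n) * (2 / 3) ^ (3 * (n ^ 2 + 8 * n)))
          * (2 / 3) ^ (n ^ 3 + 10 * n ^ 2 + 33 * n)) := by
          simp only [pow_add]; ring
      _ ≤ 3 ^ 14 * (2 / 3) ^ 75 * (1 * (1 / 4) ^ n) := by gcongr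
      _ = _ := by ring
  have b2 : ((9 : ℝ) / 10) ^ (6 * d - 6 * (n + 4) ^ 3) ≤ (9 / 10) ^ 120 * (1 / 4) ^ n := by
    clear b1
    rw [e3]
    have h : 14 * n + 120 ≤ 12 * n ^ 2 + 90 * n + 120 := by
      have := Nat.zero_le (n ^ 2)
      omega
    calc ((9 : ℝ) / 10) ^ (12 * n ^ 2 + 90 * n + 120) ≤ (9 / 10) ^ (14 * n + 120) :=
          pow_le_pow_of_le_one (by norm_num) (by norm_num) h
      _ = (9 / 10) ^ 120 * ((9 / 10) ^ 14) ^ n := by rw [pow_add, pow_mul, mul_comm]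
      _ ≤ _ := mul_le_mul_of_nonneg_left
          (pow_le_pow_left₀ (by norm_num) (by norm_num) _) (by positivity)
  have b3 : ((1 : ℝ) / 2) ^ (d / 2 + 1) ≤ (1 / 2) ^ 42 * (1 / 4) ^ n := by
    calc ((1 : ℝ) / 2) ^ (d / 2 + 1) ≤ (1 / 2) ^ (2 * n + 42) :=
          pow_le_pow_of_le_one (by norm_num) (by norm_num) (by omega)
      _ = (1 / 2) ^ 42 * ((1 / 2) ^ 2) ^ n := by rw [pow_add, pow_mul, mul_comm]
      _ ≤ _ := mul_le_mul_of_nonneg_left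
          (pow_le_pow_left₀ (by norm_num) (by norm_num) _) (by positivity)
  have hd0 : (0 : ℝ) ≤ d := Nat.cast_nonneg _
  have hpow : (2 : ℝ) ^ n * 2 ^ n * (1 / 4) ^ n = 1 := by
    rw [← mul_pow, ← mul_pow]; norm_num
  calc _ ≤ (84 * 2 ^ n : ℝ) * (2 * (84 * 2 ^ n) * (3 ^ 14 * (2 / 3) ^ 75 * (1 / 4) ^ n
          + (9 / 10) ^ 120 * (1 / 4) ^ n + (1 / 2) ^ 42 * (1 / 4) ^ n)) := by gcongr
    _ = (2 ^ n * 2 ^ n * (1 / 4) ^ n) *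
          (14112 * (3 ^ 14 * (2 / 3) ^ 75 + (9 / 10) ^ 120 + (1 / 2) ^ 42)) := by ring
    _ ≤ 1 / 4 := by rw [hpow]; norm_num

/-- The number of selections a vertex of slack `t` may take part in; `w` records whether the vertex
was marked for the first round. -/
def capacity (q t : ℕ) (w : Bool) : ℕ :=
  (t - 1) / (q - 1) + if t ≤ (q - 1) ^ 2 ∧ w = true then q + 1 else 0

/-- The weight, in units of `1 / (6 * q ^ 2)`, with which a vertex of slack `t` is selected. -/
def weight (q t : ℕ) (w : Bool) : ℕ :=
  if t ≤ (q - 1) ^ 2 then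
    if t < q then (if w then 36 else 0) else if w then 11 else 3
  else 6

theorem weight_le {q t : ℕ} (hq : 4 ≤ q) (w : Bool) : weight q t w ≤ 6 * q ^ 2 := by
  unfold weight
  split_ifs <;> nlinarith

theorem weight_mul_le {q t : ℕ} (hq : 4 ≤ q) (ht : 1 ≤ t) (w : Bool) :
    weight q t w * t ≤ 6 * q * capacity q t w := by
  obtain ⟨n, rfl⟩ : ∃ n, q = n + 1 := ⟨q - 1, by omega⟩
  have h1 := Nat.div_add_mod (t - 1) n
  have h2 := Nat.mod_lt (t - 1) (show 0 < n by omega)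
  simp only [weight, capacity, Nat.add_sub_cancel]
  set b := (t - 1) / n
  have h3 : t ≤ n * b + n := by omega
  have h4 : n * b + 1 ≤ t := by omega
  clear_value b
  by_cases hlow : t ≤ n ^ 2
  · by_cases hsmall : t < n + 1
    · cases w <;> simp [hlow, hsmall]
      nlinarith
    · have hb : 1 ≤ b := by
        by_contra h
        have : b = 0 := by omega
        rw [this] at h3
        omega
      cases w <;> simp [hlow, hsmall]
      · nlinarith
      · nlinarith
  · have hb : n ≤ b := by
      by_contra h
      have : b + 1 ≤ n := by omega
      nlinarith
    simp [hlow]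
    nlinarith

theorem capacity_false_mul_lt {q t : ℕ} (ht : 1 ≤ t) : (q - 1) * capacity q t false < t := by
  have := Nat.mul_div_le (t - 1) (q - 1)
  simp [capacity]
  omega

theorem card_le_of_le_prod {V : Type*} [Fintype V] [DecidableEq V] (ρ : V → V) (σ : V → Bool)
    (hinj : ∀ v w, ρ v = ρ w → σ v = σ w → v = w) (S : Finset V) (φ : V → Bool → ℝ)
    (hφ : ∀ v ∈ S, ∀ b, 0 ≤ φ v b)
    (hmono : ∀ v ∈ S, ∀ w ∈ S, 0 ≤ (φ v true - φ v false) * (φ w true - φ w false))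
    (E : Finset (V → Bool)) {c p : ℝ} (hc : 0 < c)
    (hE : ∀ ω ∈ E, c ≤ ∏ v ∈ S, φ v (xor (ω (ρ v)) (σ v)))
    (hp : ∏ v ∈ S, (φ v true + φ v false) / 2 ≤ p * c) :
    (E.card : ℝ) ≤ p * Fintype.card (V → Bool) := by
  have h1 : E.card * c ≤ ∑ ω ∈ E, ∏ v ∈ S, φ v (xor (ω (ρ v)) (σ v)) := by
    simpa using Finset.card_nsmul_le_sum E _ c hE
  have h2 : ∑ ω ∈ E, ∏ v ∈ S, φ v (xor (ω (ρ v)) (σ v))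
      ≤ ∑ ω : V → Bool, ∏ v ∈ S, φ v (xor (ω (ρ v)) (σ v)) :=
    Finset.sum_le_sum_of_subset_of_nonneg (Finset.subset_univ _)
      fun ω _ _ => Finset.prod_nonneg fun v hv => hφ v hv _
  have h3 := sum_prod_signed_coin_le ρ σ hinj S φ hφ hmono
  have h4 := mul_le_mul_of_nonneg_right hp (Nat.cast_nonneg (α := ℝ) (Fintype.card (V → Bool)))
  refine le_of_mul_le_mul_right ?_ hc
  linarith

/-- Local lemma where every event depends on at most `d` bits. -/
theorem exists_forall_notMem_of_bit_sum_le {ι I : Type*} [Fintype ι] [DecidableEq ι] [Fintype I]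
    [DecidableEq I] (E : I → Finset (ι → Bool)) (D : I → Finset ι) (p : I → ℝ) {d : ℕ} {s : ℝ}
    (hE : ∀ i ω ω', (∀ x ∈ D i, ω x = ω' x) → ω ∈ E i → ω' ∈ E i)
    (hcard : ∀ i, ((E i).card : ℝ) ≤ p i * Fintype.card (ι → Bool))
    (hp0 : ∀ i, 0 ≤ p i) (hp : ∀ i, p i ≤ 1 / 4) (hD : ∀ i, (D i).card ≤ d) (hs : 0 ≤ s)
    (hsum : ∀ x, ∑ j with x ∈ D j, p j ≤ s) (hds : d * s ≤ 1 / 4) :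
    ∃ ω, ∀ i, ω ∉ E i := by
  refine exists_forall_notMem_of_sum_le E D p hE hcard hp fun i => ?_
  calc ∑ j with ¬ Disjoint (D i) (D j), p j
      ≤ ∑ j ∈ (D i).biUnion fun x => Finset.univ.filter fun j => x ∈ D j, p j := by
        refine Finset.sum_le_sum_of_subset_of_nonneg ?_ fun j _ _ => hp0 j
        intro j hj
        obtain ⟨x, hx, hx'⟩ := Finset.not_disjoint_iff.mp (Finset.mem_filter.mp hj).2
        exact Finset.mem_biUnion.mpr ⟨x, hx, by simpa using hx'⟩
    _ ≤ ∑ x ∈ D i, ∑ j with x ∈ D j, p j := by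
        have key : ∀ T : Finset ι, ∑ j ∈ T.biUnion fun x => Finset.univ.filter fun j => x ∈ D j, p j
            ≤ ∑ x ∈ T, ∑ j with x ∈ D j, p j := by
          intro T
          induction T using Finset.induction_on with
          | empty => simp
          | insert x T hx ih =>
            rw [Finset.biUnion_insert, Finset.sum_insert hx]
            refine le_trans ?_ (add_le_add_right ih _)
            rw [← Finset.sum_union_inter]
            exact le_add_of_nonneg_right (Finset.sum_nonneg fun j _ => hp0 j)
        exact key _
    _ ≤ (D i).card * s := by
        simpa using Finset.sum_le_card_nsmul (D i) _ s fun x _ => hsum x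
    _ ≤ d * s := mul_le_mul_of_nonneg_right (by exact_mod_cast hD i) hs
    _ ≤ 1 / 4 := hds

theorem card_filter_mem_image_le {V ι : Type*} [Fintype V] [DecidableEq V] [Fintype ι] (ρ : V → V)
    (σ : V → Bool) (hinj : ∀ v w, ρ v = ρ w → σ v = σ w → v = w) (S : ι → Finset V) {M : ℕ}
    (hM : ∀ y, (Finset.univ.filter fun i => y ∈ S i).card ≤ M) (x : V) :
    (Finset.univ.filter fun i => x ∈ (S i).image ρ).card ≤ 2 * M := by
  classical
  have hsub : (Finset.univ.filter fun i => x ∈ (S i).image ρ)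
      ⊆ (Finset.univ.filter fun y => ρ y = x).biUnion
        fun y => Finset.univ.filter fun i => y ∈ S i := by
    intro i hi
    obtain ⟨y, hy, hyx⟩ := Finset.mem_image.mp (Finset.mem_filter.mp hi).2
    exact Finset.mem_biUnion.mpr ⟨y, by simpa using hyx, by simpa using hy⟩
  refine (Finset.card_le_card hsub).trans ((Finset.card_biUnion_le_card_mul _ _ M
    fun y _ => hM y).trans (Nat.mul_le_mul_right _ ?_))
  have hσ : Set.InjOn σ (Finset.univ.filter fun y => ρ y = x) := by
    intro v hv w hw h
    exact hinj v w ((Finset.mem_filter.mp hv).2.trans (Finset.mem_filter.mp hw).2.symm) h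
  simpa using Finset.card_le_card_of_injOn σ (fun v _ => Finset.mem_univ _) hσ

theorem weight_false_le_true (q t : ℕ) : weight q t false ≤ weight q t true := by
  unfold weight
  split_ifs <;> simp_all

theorem mean_pow_weight_le (q t : ℕ) :
    ((9 / 10 : ℝ) ^ weight q t true + (9 / 10) ^ weight q t false) / 2 ≤ (9 / 10) ^ 6 := by
  unfold weight
  split_ifs <;> simp_all <;> norm_num

open Classical in
/-- Few marked neighbours: the failure event is rare. -/
theorem card_filter_many_marked_le {V : Type*} [Fintype V] {q d t : ℕ} (hq : 4 ≤ q)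
    (hqd : (q - 1) ^ 2 ≤ d) (ρ : V → V) (σ : V → Bool)
    (hinj : ∀ v w, ρ v = ρ w → σ v = σ w → v = w) (S : Finset V) (ht : 1 ≤ t)
    (htq : t ≤ (q - 1) ^ 2) (hS : S.card + t ≤ d) :
    ((Finset.univ.filter fun ω : V → Bool =>
        d ≤ (S.filter fun y => xor (ω (ρ y)) (σ y)).card + (q - 1) * capacity q t true).card : ℝ)
      ≤ 3 ^ (q ^ 2 - 2) * (2 / 3) ^ (d - (q - 1) ^ 2) * Fintype.card (V → Bool) := by
  refine card_le_of_le_prod ρ σ hinj S (fun _ b => if b then 3 else 1)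
    (fun v _ b => by split_ifs <;> norm_num) (fun v _ w _ => by norm_num) _
    (c := 3 ^ d / 3 ^ ((q - 1) * capacity q t true)) (by positivity) ?_ ?_
  · intro ω hω
    have hω := (Finset.mem_filter.mp hω).2
    rw [← Finset.prod_filter, Finset.prod_const, div_le_iff₀ (by positivity), ← pow_add]
    exact pow_le_pow_right₀ (by norm_num) hω
  · have hcap : (q - 1) * capacity q t true + 2 ≤ t + q ^ 2 := by
      have h := capacity_false_mul_lt (q := q) ht
      have e : capacity q t true = capacity q t false + (q + 1) := by simp [capacity, htq]
      obtain ⟨n, rfl⟩ : ∃ n, q = n + 1 := ⟨q - 1, by omega⟩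
      rw [e]
      simp only [Nat.add_sub_cancel] at h ⊢
      nlinarith
    obtain ⟨e, rfl⟩ : ∃ e, d = t + e := ⟨d - t, by omega⟩
    have h1 : ((2 : ℝ) / 3) ^ e ≤ (2 / 3) ^ (t + e - (q - 1) ^ 2) :=
      pow_le_pow_of_le_one (by norm_num) (by norm_num) (by omega)
    have h2 : (2 : ℝ) ^ e = (2 / 3) ^ e * 3 ^ e := by
      rw [← mul_pow]; norm_num
    have h3 : (3 : ℝ) ^ ((q - 1) * capacity q t true) ≤ 3 ^ (q ^ 2 - 2) * 3 ^ t := by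
      rw [← pow_add]
      exact pow_le_pow_right₀ (by norm_num) (by omega)
    have h4 : ∏ v ∈ S, (((if true = true then 3 else 1 : ℝ) +
        (if false = true then 3 else 1 : ℝ)) / 2) = 2 ^ S.card := by
      norm_num
    rw [h4, ← mul_div_assoc, le_div_iff₀ (by positivity)]
    calc (2 : ℝ) ^ S.card * 3 ^ ((q - 1) * capacity q t true)
        ≤ 2 ^ e * (3 ^ (q ^ 2 - 2) * 3 ^ t) :=
          mul_le_mul (pow_le_pow_right₀ (by norm_num) (by omega)) h3 (by positivity) (by positivity)
      _ = 3 ^ (q ^ 2 - 2) * (2 / 3) ^ e * 3 ^ (t + e) := by rw [h2, pow_add]; ring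
      _ ≤ _ := by gcongr

/-- Small total weight on a neighborhood: the failure event is rare. -/
theorem card_filter_light_le {V : Type*} [Fintype V] [DecidableEq V] {q d : ℕ}
    (hqd : q ^ 3 ≤ d) (ρ : V → V) (σ : V → Bool)
    (hinj : ∀ v w, ρ v = ρ w → σ v = σ w → v = w) (S : Finset V) (t : V → ℕ)
    (hS : S.card = d) :
    ((Finset.univ.filter fun ω : V → Bool =>
        ∑ v ∈ S, weight q (t v) (xor (ω (ρ v)) (σ v)) < 6 * q ^ 3).card : ℝ)
      ≤ (9 / 10) ^ (6 * d - 6 * q ^ 3) * Fintype.card (V → Bool) := by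
  refine card_le_of_le_prod ρ σ hinj S (fun v b => (9 / 10) ^ weight q (t v) b)
    (fun v _ b => by positivity) (fun v _ w _ => mul_nonneg_of_nonpos_of_nonpos ?_ ?_) _
    (c := (9 / 10) ^ (6 * q ^ 3)) (by positivity) ?_ ?_
  · exact sub_nonpos.mpr (pow_le_pow_of_le_one (by norm_num) (by norm_num)
      (weight_false_le_true _ _))
  · exact sub_nonpos.mpr (pow_le_pow_of_le_one (by norm_num) (by norm_num)
      (weight_false_le_true _ _))
  · intro ω hω
    have hω := (Finset.mem_filter.mp hω).2
    rw [Finset.prod_pow_eq_pow_sum]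
    exact pow_le_pow_of_le_one (by norm_num) (by norm_num) hω.le
  · calc _ ≤ ∏ v ∈ S, (9 / 10 : ℝ) ^ 6 :=
          Finset.prod_le_prod (fun v _ => by positivity) fun v _ => mean_pow_weight_le q (t v)
      _ = (9 / 10) ^ (6 * d - 6 * q ^ 3) * (9 / 10) ^ (6 * q ^ 3) := by
          rw [Finset.prod_const, hS, ← pow_mul, ← pow_add]
          congr 1
          omega
      _ ≤ _ := le_rfl

/-- All vertices of a large boundary being marked: the failure event is rare. -/
theorem card_filter_all_marked_le {V : Type*} [Fintype V] [DecidableEq V] (ρ : V → V)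
    (σ : V → Bool) (hinj : ∀ v w, ρ v = ρ w → σ v = σ w → v = w) (S : Finset V) :
    ((Finset.univ.filter fun ω : V → Bool => ∀ v ∈ S, xor (ω (ρ v)) (σ v) = true).card : ℝ)
      ≤ (1 / 2) ^ S.card * Fintype.card (V → Bool) := by
  refine card_le_of_le_prod ρ σ hinj S (fun _ b => if b then 1 else 0)
    (fun v _ b => by split_ifs <;> norm_num) (fun v _ w _ => by norm_num) _
    (c := 1) one_pos ?_ ?_
  · intro ω hω
    have hω := (Finset.mem_filter.mp hω).2
    rw [Finset.prod_eq_one fun v hv => if_pos (hω v hv)]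
  · simp

theorem sum_ite_const_le {ι : Type*} [Fintype ι] {P : ι → Prop} [DecidablePred P] {c b : ℝ}
    (hc : 0 ≤ c) (h : ((Finset.univ.filter P).card : ℝ) ≤ b) :
    ∑ i, (if P i then c else 0) ≤ b * c := by
  rw [← Finset.sum_filter, Finset.sum_const, nsmul_eq_mul]
  exact mul_le_mul_of_nonneg_right h hc

open Classical in
/-- A marking of the vertices avoiding all failure events. -/
theorem exists_marking {V : Type*} [Fintype V] {q d : ℕ} (hq : 4 ≤ q)
    (hd : d + q + 8 = q ^ 3 + 2 * q ^ 2) (ρ : V → V) (σ : V → Bool)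
    (hinj : ∀ v w, ρ v = ρ w → σ v = σ w → v = w) (t : V → ℕ) (L A : Finset V)
    (hL : ∀ v ∈ L, 1 ≤ t v ∧ t v ≤ (q - 1) ^ 2) (Γ : SimpleGraph V)
    (hΓ : ∀ w ∈ L, (L.filter (Γ.Adj w)).card + t w ≤ d) (N : V → Finset V)
    (hN : ∀ a ∈ A, (N a).card = d) (hNL : ∀ a ∈ A, ∀ v ∈ N a, v ∉ L → (q - 1) ^ 2 < t v)
    (hcol : ∀ v, (A.filter fun a => v ∈ N a).card ≤ q * t v) (𝒞 : Finset (Finset V))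
    (S : Finset V → Finset V) (hS : ∀ C ∈ 𝒞, (S C).card = d / 2 + 1)
    (hScol : ∀ v, (𝒞.filter fun C => v ∈ S C).card ≤ d) :
    ∃ ω : V → Bool,
      (∀ w ∈ L, ((L.filter (Γ.Adj w)).filter fun y => xor (ω (ρ y)) (σ y)).card
        + (q - 1) * capacity q (t w) true < d) ∧
      (∀ a ∈ A, 6 * q ^ 3 ≤ ∑ v ∈ N a, weight q (t v) (xor (ω (ρ v)) (σ v))) ∧
      ∀ C ∈ 𝒞, ∃ v ∈ S C, xor (ω (ρ v)) (σ v) = false := by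
  have hqd3 : q ^ 3 ≤ d := by nlinarith
  have hqd2 : q * (q - 1) ^ 2 ≤ d := by
    obtain ⟨n, rfl⟩ : ∃ n, q = n + 1 := ⟨q - 1, by omega⟩
    simp only [Nat.add_sub_cancel]
    nlinarith
  have hqd1 : (q - 1) ^ 2 ≤ d := by nlinarith [Nat.zero_le ((q - 1) ^ 2)]
  have hd2 : 2 ≤ d := by nlinarith
  let pw : ℝ := 3 ^ (q ^ 2 - 2) * (2 / 3) ^ (d - (q - 1) ^ 2)
  let pa : ℝ := (9 / 10) ^ (6 * d - 6 * q ^ 3)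
  let pc : ℝ := (1 / 2) ^ (d / 2 + 1)
  have hpw : 0 ≤ pw := by positivity
  have hpa : 0 ≤ pa := by positivity
  have hpc : 0 ≤ pc := by positivity
  have hbound : (d : ℝ) * (2 * d * (pw + pa + pc)) ≤ 1 / 4 := failure_bounds hq hd
  have hsmall : pw + pa + pc ≤ 1 / 4 := by
    refine le_trans ?_ hbound
    have : (1 : ℝ) ≤ d := by exact_mod_cast (show 1 ≤ d by omega)
    have h1 : (1 : ℝ) ≤ d * (2 * d) := by nlinarith
    nlinarith [mul_le_mul_of_nonneg_right h1 (show 0 ≤ pw + pa + pc by linarith)]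
  let D : L ⊕ A ⊕ 𝒞 → Finset V := Sum.elim (fun w => (L.filter (Γ.Adj w)).image ρ)
    (Sum.elim (fun a => ((N a).filter fun v => v ∈ L).image ρ) fun C => (S C).image ρ)
  let E : L ⊕ A ⊕ 𝒞 → Finset (V → Bool) := Sum.elim
    (fun w => Finset.univ.filter fun ω : V → Bool =>
      d ≤ ((L.filter (Γ.Adj w)).filter fun y => xor (ω (ρ y)) (σ y)).card
        + (q - 1) * capacity q (t w) true)
    (Sum.elim (fun a => Finset.univ.filter fun ω : V → Bool =>
      ∑ v ∈ N a, weight q (t v) (xor (ω (ρ v)) (σ v)) < 6 * q ^ 3)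
      fun C => Finset.univ.filter fun ω : V → Bool => ∀ v ∈ S C, xor (ω (ρ v)) (σ v) = true)
  let p : L ⊕ A ⊕ 𝒞 → ℝ := Sum.elim (fun _ => pw) (Sum.elim (fun _ => pa) fun _ => pc)
  obtain ⟨ω, hω⟩ := exists_forall_notMem_of_bit_sum_le E D p (d := d)
    (s := 2 * d * (pw + pa + pc)) (by
      rintro (w | a | C) ω ω' h hω
      · simp only [E, D, Sum.elim_inl, Finset.mem_filter, Finset.mem_univ, true_and] at h hω ⊢
        convert hω using 3
        refine Finset.filter_congr fun y hy => ?_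
        rw [h _ (Finset.mem_image_of_mem ρ hy)]
      · simp only [E, D, Sum.elim_inl, Sum.elim_inr, Finset.mem_filter, Finset.mem_univ,
          true_and] at h hω ⊢
        convert hω using 1
        refine Finset.sum_congr rfl fun v hv => ?_
        by_cases hvL : v ∈ L
        · rw [h _ (Finset.mem_image_of_mem ρ (Finset.mem_filter.mpr ⟨hv, hvL⟩))]
        · have := hNL a a.2 v hv hvL
          simp [weight, not_le.mpr this]
      · simp only [E, D, Sum.elim_inr, Finset.mem_filter, Finset.mem_univ, true_and] at h hω ⊢
        intro v hv
        rw [← h _ (Finset.mem_image_of_mem ρ hv)]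
        exact hω v hv) (by
      rintro (w | a | C)
      · exact card_filter_many_marked_le hq hqd1 ρ σ hinj _ (hL w w.2).1 (hL w w.2).2 (hΓ w w.2)
      · exact card_filter_light_le hqd3 ρ σ hinj _ t (hN a a.2)
      · simp only [E, p, Sum.elim_inr, pc]
        rw [← hS C C.2]
        exact card_filter_all_marked_le ρ σ hinj _)
    (by rintro (w | a | C) <;> assumption)
    (by rintro (w | a | C) <;> simp only [p, Sum.elim_inl, Sum.elim_inr] <;> linarith)
    (by
      rintro (w | a | C)
      · exact Finset.card_image_le.trans (by have := hΓ w w.2; omega)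
      · exact Finset.card_image_le.trans
          ((Finset.card_le_card (Finset.filter_subset _ _)).trans (hN a a.2).le)
      · refine Finset.card_image_le.trans ?_
        have := hS C C.2
        omega)
    (by positivity) (by
      intro x
      rw [Finset.sum_filter, Fintype.sum_sum_type, Fintype.sum_sum_type]
      have h1 := card_filter_mem_image_le ρ σ hinj (fun w : L => L.filter (Γ.Adj w)) (M := d) (by
        intro y
        by_cases hy : y ∈ L
        · refine le_trans ?_ (le_trans (Nat.le_add_right _ _) (hΓ y hy))
          refine Finset.card_le_card_of_injOn Subtype.val ?_ Subtype.val_injective.injOn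
          intro w hw
          simp only [Finset.coe_filter, Finset.mem_univ, true_and, Finset.mem_filter,
            Set.mem_ofPred_eq] at hw ⊢
          exact ⟨w.2, hw.2.symm⟩
        · simp [hy]) x
      have h2 := card_filter_mem_image_le ρ σ hinj (fun a : A => (N a).filter fun v => v ∈ L)
        (M := d) (by
        intro y
        by_cases hy : y ∈ L
        · refine le_trans ?_ ((hcol y).trans ((Nat.mul_le_mul_left q (hL y hy).2).trans hqd2))
          refine Finset.card_le_card_of_injOn Subtype.val ?_ Subtype.val_injective.injOn
          intro w hw
          simp only [Finset.coe_filter, Finset.mem_univ, true_and, Finset.mem_filter,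
            Set.mem_ofPred_eq] at hw ⊢
          exact ⟨w.2, hw.1⟩
        · simp [hy]) x
      have h3 := card_filter_mem_image_le ρ σ hinj (fun C : 𝒞 => S C) (M := d) (by
        intro y
        refine le_trans ?_ (hScol y)
        refine Finset.card_le_card_of_injOn Subtype.val ?_ Subtype.val_injective.injOn
        intro w hw
        simp only [Finset.coe_filter, Finset.mem_univ, true_and,
          Set.mem_ofPred_eq] at hw ⊢
        exact ⟨w.2, hw⟩) x
      rw [mul_add, mul_add, add_assoc]
      refine add_le_add ?_ (add_le_add ?_ ?_)
      · exact sum_ite_const_le hpw (by exact_mod_cast h1)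
      · exact sum_ite_const_le hpa (by exact_mod_cast h2)
      · exact sum_ite_const_le hpc (by exact_mod_cast h3)) hbound
  refine ⟨ω, fun w hw => ?_, fun a ha => ?_, fun C hC => ?_⟩
  · have := hω (Sum.inl ⟨w, hw⟩)
    simpa [E] using this
  · have := hω (Sum.inr (Sum.inl ⟨a, ha⟩))
    simpa [E] using this
  · have := hω (Sum.inr (Sum.inr ⟨C, hC⟩))
    simpa [E] using this

/-- A fractional matching saturating the left side yields a matching in its support. -/
theorem exists_injective_of_fractional_matching {X Y : Type*} [Fintype X] [Fintype Y]
    [DecidableEq Y] (w : X → Y → ℝ) (hw : ∀ x y, 0 ≤ w x y) (hrow : ∀ x, 1 ≤ ∑ y, w x y)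
    (hcol : ∀ y, ∑ x, w x y ≤ 1) :
    ∃ f : X → Y, Function.Injective f ∧ ∀ x, w x (f x) ≠ 0 := by
  classical
  let t : X → Finset Y := fun x => Finset.univ.filter fun y => w x y ≠ 0
  obtain ⟨f, hf, hft⟩ := (Finset.all_card_le_biUnion_card_iff_exists_injective t).mp (by
    intro S
    have h1 : (S.card : ℝ) ≤ ∑ x ∈ S, ∑ y, w x y := by
      simpa using Finset.card_nsmul_le_sum S (fun x => ∑ y, w x y) 1 fun x _ => hrow x
    have h2 : ∑ x ∈ S, ∑ y, w x y = ∑ x ∈ S, ∑ y ∈ S.biUnion t, w x y := by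
      refine Finset.sum_congr rfl fun x hx => (Finset.sum_subset (Finset.subset_univ _) ?_).symm
      intro y _ hy
      by_contra h
      exact hy (Finset.mem_biUnion.mpr ⟨x, hx, Finset.mem_filter.mpr ⟨Finset.mem_univ _, h⟩⟩)
    have h3 : ∑ x ∈ S, ∑ y ∈ S.biUnion t, w x y ≤ (S.biUnion t).card := by
      rw [Finset.sum_comm]
      have : ∀ y ∈ S.biUnion t, ∑ x ∈ S, w x y ≤ 1 := fun y _ =>
        (Finset.sum_le_sum_of_subset_of_nonneg (Finset.subset_univ _)
          fun x _ _ => hw x y).trans (hcol y)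
      simpa using Finset.sum_le_card_nsmul _ _ _ this
    exact_mod_cast (h1.trans h2.le).trans h3)
  exact ⟨f, hf, fun x => (Finset.mem_filter.mp (hft x)).2⟩

/-- Integrality of degree-constrained bipartite selections. -/
theorem exists_selection_of_fractional {α V : Type*} [Fintype α] [Fintype V] [DecidableEq α]
    [DecidableEq V] (z : α → V → ℝ) (m : V → ℕ) (q : ℕ) (hq : 0 < q)
    (h0 : ∀ a v, 0 ≤ z a v) (h1 : ∀ a v, z a v ≤ 1) (hrow : ∀ a, (q : ℝ) ≤ ∑ v, z a v)
    (hcol : ∀ v, ∑ a, z a v ≤ m v) :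
    ∃ Q : α → Finset V, (∀ a, (Q a).card = q) ∧ (∀ a, ∀ v ∈ Q a, z a v ≠ 0) ∧
      ∀ v, (Finset.univ.filter fun a => v ∈ Q a).card ≤ m v := by
  have hq' : (0 : ℝ) < q := by exact_mod_cast hq
  let w : (α × Fin q) ⊕ (α × V) → (α × V) ⊕ (Σ v, Fin (m v)) → ℝ := fun x y =>
    match x, y with
    | .inl (a, _), .inl (a', v) => if a = a' then z a v / ∑ u, z a u else 0
    | .inl _, .inr _ => 0
    | .inr (a, v), .inl (a', v') => if a = a' ∧ v = v' then 1 - z a v else 0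
    | .inr (a, v), .inr ⟨v', _⟩ => if v = v' then z a v / m v else 0
  have hZ : ∀ a, 0 < ∑ u, z a u := fun a => hq'.trans_le (hrow a)
  obtain ⟨f, hf, hfw⟩ := exists_injective_of_fractional_matching w (by
      rintro (⟨a, i⟩ | ⟨a, v⟩) (⟨a', v'⟩ | ⟨v', j⟩) <;> simp only [w]
      · split_ifs
        · exact div_nonneg (h0 _ _) (hZ a).le
        · exact le_rfl
      · exact le_rfl
      · split_ifs
        · linarith [h1 a v]
        · exact le_rfl
      · split_ifs
        · exact div_nonneg (h0 _ _) (Nat.cast_nonneg _)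
        · exact le_rfl) (by
      rintro (⟨a, i⟩ | ⟨a, v⟩) <;>
        simp only [w, Fintype.sum_sum_type, Fintype.sum_prod_type, Fintype.sum_sigma]
      · rw [Finset.sum_eq_single a (by intro b _ hb; simp [hb.symm]) (by simp)]
        simp [← Finset.sum_div, div_self (hZ a).ne']
      · rw [Finset.sum_eq_single a (by intro b _ hb; simp [hb.symm]) (by simp)]
        simp only [true_and, Finset.sum_ite_eq, Finset.mem_univ, if_true]
        rw [Finset.sum_eq_single v (by intro b _ hb; simp [hb.symm]) (by simp)]
        simp only [if_true, Finset.sum_const, Finset.card_univ, Fintype.card_fin, nsmul_eq_mul]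
        rcases Nat.eq_zero_or_pos (m v) with hm | hm
        · have := (Finset.single_le_sum (fun a _ => h0 a v) (Finset.mem_univ a)).trans (hcol v)
          rw [hm] at this ⊢
          simp at this ⊢
          linarith
        · have : (m v : ℝ) ≠ 0 := by positivity
          rw [mul_div_cancel₀ _ this]
          linarith) (by
      rintro (⟨a, v⟩ | ⟨v, j⟩) <;>
        simp only [w, Fintype.sum_sum_type, Fintype.sum_prod_type]
      · rw [Finset.sum_eq_single a (by intro b _ hb; simp [hb]) (by simp)]
        rw [Finset.sum_eq_single a (by intro b _ hb; simp [hb]) (by simp)]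
        simp only [if_true, true_and, Finset.sum_ite_eq', Finset.mem_univ, Finset.sum_const,
          Finset.card_univ, Fintype.card_fin, nsmul_eq_mul]
        have : q * (z a v / ∑ u, z a u) ≤ z a v := by
          rw [← mul_div_assoc, div_le_iff₀ (hZ a), mul_comm]
          exact mul_le_mul_of_nonneg_left (hrow a) (h0 a v)
        linarith
      · simp only [Finset.sum_ite_eq', Finset.mem_univ, if_true, Finset.sum_const_zero, zero_add,
          ← Finset.sum_div]
        have : (0 : ℝ) < m v := by exact_mod_cast j.pos
        rw [div_le_one this]
        exact hcol v)
  have hl : ∀ a i, ∃ v, f (.inl (a, i)) = .inl (a, v) ∧ z a v ≠ 0 := by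
    intro a i
    have := hfw (.inl (a, i))
    rcases hy : f (.inl (a, i)) with ⟨a', v⟩ | y
    · simp only [hy, w] at this
      split_ifs at this with h
      · subst h
        exact ⟨v, rfl, fun h => this (by simp [h])⟩
      · exact absurd rfl this
    · simp only [hy, w] at this
      exact absurd rfl this
  choose g hg hgz using hl
  refine ⟨fun a => Finset.univ.image (g a), ?_, ?_, ?_⟩
  · intro a
    rw [Finset.card_image_of_injective, Finset.card_univ, Fintype.card_fin]
    intro i j hij
    have : f (.inl (a, i)) = f (.inl (a, j)) := by rw [hg, hg, hij]
    simpa using hf this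
  · intro a v hv
    obtain ⟨i, -, rfl⟩ := Finset.mem_image.mp hv
    exact hgz a i
  · intro v
    have hr : ∀ a, v ∈ Finset.univ.image (g a) →
        ∃ j : Fin (m v), f (.inr (a, v)) = .inr ⟨v, j⟩ := by
      intro a hv
      obtain ⟨i, -, hi⟩ := Finset.mem_image.mp hv
      have := hfw (.inr (a, v))
      rcases hy : f (.inr (a, v)) with ⟨a', v'⟩ | ⟨v', j⟩
      · simp only [hy, w] at this
        split_ifs at this with h
        · obtain ⟨rfl, rfl⟩ := h
          have h2 := hg a i
          rw [hi, ← hy] at h2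
          exact absurd (hf h2) (by simp)
        · exact absurd rfl this
      · simp only [hy, w] at this
        split_ifs at this with h
        · subst h
          exact ⟨j, rfl⟩
        · exact absurd rfl this
    by_cases hm : m v = 0
    · rw [hm, Nat.le_zero, Finset.card_eq_zero, Finset.filter_eq_empty_iff]
      intro a _ ha
      exact (Fin.cast hm (hr a ha).choose).elim0
    · have : Nonempty (Fin (m v)) := ⟨⟨0, Nat.pos_of_ne_zero hm⟩⟩
      choose! k hk using hr
      have := Finset.card_le_card_of_injOn (s := Finset.univ.filter fun a =>
        v ∈ Finset.univ.image (g a)) (t := (Finset.univ : Finset (Fin (m v)))) k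
        (fun _ _ => Finset.mem_univ _) (by
          intro a ha b hb hab
          have h := hk a (Finset.mem_filter.mp ha).2
          rw [hab, ← hk b (Finset.mem_filter.mp hb).2] at h
          simpa using hf h)
      simpa using this

open Classical in
/-- Sets `N a` of total weight at least `6 * q ^ 3` contain `q`-subsets respecting the
capacities. -/
theorem exists_selection_of_weight {V : Type*} [Fintype V] {q : ℕ} (hq : 4 ≤ q) (A : Finset V)
    (N : V → Finset V) (t : V → ℕ) (w : V → Bool)
    (hrow : ∀ a ∈ A, 6 * q ^ 3 ≤ ∑ v ∈ N a, weight q (t v) (w v))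
    (hcol : ∀ v, (A.filter fun a => v ∈ N a).card ≤ q * t v) :
    ∃ Q : A → Finset V, (∀ a, (Q a).card = q) ∧ (∀ a : A, Q a ⊆ N a) ∧
      ∀ v, (Finset.univ.filter fun a => v ∈ Q a).card ≤ capacity q (t v) (w v) := by
  have hq0 : (0 : ℝ) < 6 * (q : ℝ) ^ 2 := by
    have : (0 : ℝ) < q := by exact_mod_cast (show 0 < q by omega)
    positivity
  obtain ⟨Q, h1, h2, h3⟩ := exists_selection_of_fractional
    (fun (a : A) v => if v ∈ N a then (weight q (t v) (w v) : ℝ) / (6 * q ^ 2) else 0)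
    (fun v => capacity q (t v) (w v)) q (by omega)
    (fun a v => by split_ifs <;> positivity)
    (fun a v => by
      split_ifs
      · rw [div_le_one hq0]
        exact_mod_cast weight_le hq (w v)
      · exact zero_le_one)
    (fun a => by
      rw [← Finset.sum_filter, Finset.filter_mem_eq_inter, Finset.univ_inter, ← Finset.sum_div,
        le_div_iff₀ hq0]
      have := hrow a a.2
      have h : ((6 * q ^ 3 : ℕ) : ℝ) ≤ ((∑ v ∈ N a, weight q (t v) (w v) : ℕ) : ℝ) := by
        exact_mod_cast this
      push_cast at h
      linarith [show (q : ℝ) * (6 * q ^ 2) = 6 * q ^ 3 by ring])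
    (fun v => by
      have e : ∑ a : A, (if v ∈ N a then (weight q (t v) (w v) : ℝ) / (6 * q ^ 2) else 0)
          = (A.filter fun a => v ∈ N a).card * ((weight q (t v) (w v) : ℝ) / (6 * q ^ 2)) := by
        rw [Finset.sum_coe_sort A
          (fun a => if v ∈ N a then (weight q (t v) (w v) : ℝ) / (6 * q ^ 2) else 0),
          ← Finset.sum_filter, Finset.sum_const, nsmul_eq_mul]
      rw [e, ← mul_div_assoc, div_le_iff₀ hq0]
      have key : (A.filter fun a => v ∈ N a).card * weight q (t v) (w v)
          ≤ capacity q (t v) (w v) * (6 * q ^ 2) := by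
        rcases Nat.eq_zero_or_pos (t v) with h0 | h0
        · have := hcol v
          rw [h0, mul_zero, Nat.le_zero] at this
          rw [this, zero_mul]
          exact Nat.zero_le _
        · calc _ ≤ q * t v * weight q (t v) (w v) := Nat.mul_le_mul_right _ (hcol v)
            _ = q * (weight q (t v) (w v) * t v) := by ring
            _ ≤ q * (6 * q * capacity q (t v) (w v)) :=
                Nat.mul_le_mul_left _ (weight_mul_le hq h0 _)
            _ = _ := by ring
      exact_mod_cast key)
  refine ⟨Q, h1, fun a v hv => ?_, h3⟩
  by_contra h
  exact h2 a v hv (if_neg h)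

/-- A threshold selection: `R + 1` elements of weight at least `R`, where the total weight is too
small for `r` parts of weight at least `d + 1 - r` each whenever `r > R`. -/
theorem exists_threshold_subset {V : Type*} (N : Finset V) (e : V → ℕ) (d : ℕ)
    (hN : N.Nonempty) (hed : ∀ w ∈ N, e w < d) (hbig : (N.filter fun w => d < 2 * e w).card ≤ 1)
    (hNd : 2 * N.card ≤ d) :
    ∃ (R : ℕ) (K : Finset V), K ⊆ N ∧ K.card = R + 1 ∧ (∀ w ∈ K, R ≤ e w) ∧
      ∀ r, R < r → r ≤ N.card → ∑ w ∈ N, e w < r * (d + 1 - r) := by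
  classical
  set P : ℕ → Prop := fun r => r * (d + 1 - r) ≤ ∑ w ∈ N, e w with hP
  set R := Nat.findGreatest P N.card with hR
  have hRN : R ≤ N.card := Nat.findGreatest_le _
  have hPR : R * (d + 1 - R) ≤ ∑ w ∈ N, e w :=
    Nat.findGreatest_spec (P := P) (Nat.zero_le _) (by simp [hP])
  have hgt : ∀ r, R < r → r ≤ N.card → ∑ w ∈ N, e w < r * (d + 1 - r) := fun r h1 h2 =>
    not_le.mp (Nat.findGreatest_is_greatest (P := P) h1 h2)
  clear_value R
  have hT : R + 1 ≤ (N.filter fun w => R ≤ e w).card := by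
    by_contra hlt
    rcases Nat.eq_zero_or_pos R with h0 | hpos
    · rw [h0] at hlt
      simp at hlt
      exact hN.ne_empty hlt
    · have h1 : ∑ w ∈ N, 2 * e w ≤ ∑ w ∈ N, ((if R ≤ e w then d else 2 * (R - 1)) +
          if d < 2 * e w then d - 2 else 0) := by
        refine Finset.sum_le_sum fun w hw => ?_
        have := hed w hw
        split_ifs <;> omega
      have h2 := Finset.card_filter_add_card_filter_not (s := N) (fun w => R ≤ e w)
      rw [Finset.sum_add_distrib, Finset.sum_ite, Finset.sum_ite, ← Finset.mul_sum] at h1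
      simp only [Finset.sum_const, smul_eq_mul, mul_zero, add_zero] at h1
      set t := (N.filter fun w => R ≤ e w).card
      set t' := (N.filter fun w => ¬ R ≤ e w).card
      have h3 : (N.filter fun w => d < 2 * e w).card * (d - 2) ≤ d - 2 := by
        simpa using Nat.mul_le_mul_right (d - 2) hbig
      obtain ⟨s, rfl⟩ : ∃ s, R = s + 1 := ⟨R - 1, by omega⟩
      obtain ⟨u, hu⟩ : ∃ u, d = 2 * N.card + u := ⟨d - 2 * N.card, by omega⟩
      obtain ⟨y, hy⟩ : ∃ y, N.card = s + 1 + y := ⟨N.card - (s + 1), by omega⟩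
      obtain ⟨x, hx⟩ : ∃ x, s + 1 = t + x := ⟨s + 1 - t, by omega⟩
      have e1 : d + 1 - (s + 1) = d - s := by omega
      rw [e1] at hPR
      zify [show s ≤ d by omega] at hPR
      have e2 : s + 1 - 1 = s := by omega
      rw [e2] at h1
      have h4 : 2 * ∑ w ∈ N, e w ≤ t * d + t' * (2 * s) + (d - 2) := by omega
      have e3 : t' = y + x := by omega
      zify [show 2 ≤ d by omega] at h4 e3 hx hy hu
      rw [e3] at h4
      have ht : (t : ℤ) = s + 1 - x := by linarith
      have hx0 : (0 : ℤ) ≤ x := by positivity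
      have hy0 : (0 : ℤ) ≤ y := by positivity
      have hs0 : (0 : ℤ) ≤ s := by positivity
      have hu0 : (0 : ℤ) ≤ u := by positivity
      rw [ht, hu, hy] at h4
      rw [hu, hy] at hPR
      nlinarith [mul_nonneg hx0 hy0, mul_nonneg hx0 hs0, mul_nonneg hx0 hu0, mul_nonneg hs0 hu0,
        mul_nonneg hs0 hy0]
  obtain ⟨K, hK, hKc⟩ := Finset.exists_subset_card_eq hT
  exact ⟨R, K, hK.trans (Finset.filter_subset _ _), hKc,
    fun w hw => (Finset.mem_filter.mp (hK hw)).2, hgt⟩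

/-- `f` is a proper coloring of the vertices of `F` lying in `S`. -/
def ProperOn {V : Type*} {d : ℕ} (F : SimpleGraph V) (S : Finset V) (f : V → Fin d) : Prop :=
  ∀ x ∈ S, ∀ y ∈ S, F.Adj x y → f x ≠ f y

/-- Greedy extension of a partial coloring along a degenerate ordering. -/
theorem ProperOn.exists_extension {V : Type*} [DecidableEq V] {d : ℕ} {F : SimpleGraph V}
    [DecidableRel F.Adj] {S T : Finset V} {f : V → Fin d} (hf : ProperOn F S f)
    (hST : Disjoint S T)
    (hT : ∀ T' ⊆ T, T'.Nonempty → ∃ v ∈ T', ((S ∪ T').filter (F.Adj v)).card < d) :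
    ∃ g : V → Fin d, (∀ x ∈ S, g x = f x) ∧ ProperOn F (S ∪ T) g := by
  induction hn : T.card generalizing T with
  | zero =>
    rw [Finset.card_eq_zero] at hn
    subst hn
    exact ⟨f, fun _ _ => rfl, by simpa using hf⟩
  | succ n ih =>
    obtain ⟨v, hv, hdeg⟩ := hT T subset_rfl (Finset.card_pos.mp (by omega))
    have hvS : v ∉ S := fun h => Finset.disjoint_left.mp hST h hv
    obtain ⟨g, hg, hprop⟩ := ih (T := T.erase v)
      (hST.mono_right (Finset.erase_subset _ _))
      (fun T' h => hT T' (h.trans (Finset.erase_subset _ _)))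
      (by rw [Finset.card_erase_of_mem hv]; omega)
    obtain ⟨c, -, hc⟩ := Finset.exists_mem_notMem_of_card_lt_card
      (s := ((S ∪ T).filter (F.Adj v)).image g) (t := Finset.univ)
      (by simpa using Finset.card_image_le.trans_lt hdeg)
    have hc' : ∀ y ∈ S ∪ T, F.Adj v y → g y ≠ c := fun y hy h e =>
      hc (Finset.mem_image.mpr ⟨y, Finset.mem_filter.mpr ⟨hy, h⟩, e⟩)
    refine ⟨Function.update g v c, ?_, ?_⟩
    · intro x hx
      rw [Function.update_of_ne (by rintro rfl; exact hvS hx)]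
      exact hg x hx
    · have hmem : ∀ x ∈ S ∪ T, x ≠ v → x ∈ S ∪ T.erase v := by
        intro x hx hxv
        rcases Finset.mem_union.mp hx with h | h
        · exact Finset.mem_union_left _ h
        · exact Finset.mem_union_right _ (Finset.mem_erase.mpr ⟨hxv, h⟩)
      intro x hx y hy hxy
      by_cases h1 : x = v
      · subst h1
        rw [Function.update_self, Function.update_of_ne hxy.ne']
        exact (hc' y hy hxy).symm
      · rw [Function.update_of_ne h1]
        by_cases h2 : y = v
        · subst h2
          rw [Function.update_self]
          exact hc' x hx hxy.symm
        · rw [Function.update_of_ne h2]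
          exact hprop x (hmem x hx h1) y (hmem y hy h2) hxy

/-- Greedy extension when every nonempty part of the uncolored set has an edge to a vertex which
is neither colored nor in that part. -/
theorem ProperOn.exists_extension_of_boundary {V : Type*} [DecidableEq V] {d : ℕ}
    {F : SimpleGraph V} [DecidableRel F.Adj] {B S T : Finset V} {f : V → Fin d}
    (hf : ProperOn F S f) (hST : Disjoint S T) (hSB : S ⊆ B) (hTB : T ⊆ B)
    (hdeg : ∀ v ∈ T, (B.filter (F.Adj v)).card ≤ d)
    (hT : ∀ T' ⊆ T, T'.Nonempty → ∃ v ∈ T', ∃ u ∈ B, u ∉ S ∧ u ∉ T' ∧ F.Adj v u) :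
    ∃ g : V → Fin d, (∀ x ∈ S, g x = f x) ∧ ProperOn F (S ∪ T) g := by
  refine hf.exists_extension hST fun T' hT' hne => ?_
  obtain ⟨v, hv, u, hu, huS, huT, huv⟩ := hT T' hT' hne
  refine ⟨v, hv, (Finset.card_lt_card ?_).trans_le (hdeg v (hT' hv))⟩
  refine ⟨Finset.filter_subset_filter _ (Finset.union_subset hSB (hT'.trans hTB)), fun h => ?_⟩
  have := h (Finset.mem_filter.mpr ⟨hu, huv⟩)
  rcases Finset.mem_union.mp (Finset.mem_filter.mp this).1 with h | h
  · exact huS h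
  · exact huT h

/-- If the color class `c₀` on the boundary of `C` sends few edges to `C`, a partial coloring can be
extended to the connected set `C` by ignoring that class and then swapping two colors. -/
theorem ProperOn.exists_extension_of_class {V : Type*} [DecidableEq V] {d : ℕ}
    {F : SimpleGraph V} [DecidableRel F.Adj] {B S C N : Finset V} {f : V → Fin d}
    (hf : ProperOn F S f) (hSC : Disjoint S C) (hSB : S ⊆ B) (hCB : C ⊆ B)
    (hdeg : ∀ v ∈ C, (B.filter (F.Adj v)).card ≤ d)
    (hC : ∀ T' ⊆ C, T'.Nonempty → T' ≠ C → ∃ v ∈ T', ∃ u ∈ C, u ∉ T' ∧ F.Adj v u)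
    (hN : ∀ w, w ∈ N ↔ w ∈ S ∧ ∃ z ∈ C, F.Adj w z) {c₀ : Fin d} (hc₀ : c₀ ∈ N.image f)
    (hle : ∑ w ∈ N with f w = c₀, (C.filter (F.Adj w)).card + (N.image f).card ≤ d) :
    ∃ g : V → Fin d, (∀ x ∈ S, g x = f x) ∧ ProperOn F (S ∪ C) g := by
  set K := N.filter fun w => f w = c₀ with hK
  obtain ⟨w₀, hw₀, hfw₀⟩ := Finset.mem_image.mp hc₀
  obtain ⟨hw₀S, z₀, hz₀, hwz₀⟩ := (hN w₀).mp hw₀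
  have hw₀K : w₀ ∈ K := Finset.mem_filter.mpr ⟨hw₀, hfw₀⟩
  obtain ⟨g, hgf, hg⟩ := ProperOn.exists_extension_of_boundary (B := B) (S := S \ K) (T := C)
    (f := f) (F := F)
    (fun x hx y hy => hf x (Finset.mem_sdiff.mp hx).1 y (Finset.mem_sdiff.mp hy).1)
    (hSC.mono_left Finset.sdiff_subset) (Finset.sdiff_subset.trans hSB) hCB hdeg (by
      intro T' hT' hne
      by_cases h : T' = C
      · subst h
        exact ⟨z₀, hz₀, w₀, hSB hw₀S, fun h => (Finset.mem_sdiff.mp h).2 hw₀K,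
          fun h => Finset.disjoint_left.mp hSC hw₀S h, hwz₀.symm⟩
      · obtain ⟨v, hv, u, hu, huT, hvu⟩ := hC T' hT' hne h
        exact ⟨v, hv, u, hCB hu,
          fun h => Finset.disjoint_left.mp hSC (Finset.mem_sdiff.mp h).1 hu, huT, hvu⟩)
  let bad : Finset (Fin d) := (K.biUnion fun w => (C.filter (F.Adj w)).image g) ∪
    (N.image f).erase c₀
  have hbad : bad.card < d := by
    have h1 : (K.biUnion fun w => (C.filter (F.Adj w)).image g).card
        ≤ ∑ w ∈ K, (C.filter (F.Adj w)).card :=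
      Finset.card_biUnion_le.trans (Finset.sum_le_sum fun w _ => Finset.card_image_le)
    have h2 := Finset.card_erase_add_one hc₀
    have h3 := Finset.card_union_le (K.biUnion fun w => (C.filter (F.Adj w)).image g)
      ((N.image f).erase c₀)
    simp only [bad]
    omega
  obtain ⟨c, -, hc⟩ := Finset.exists_mem_notMem_of_card_lt_card (s := bad) (t := Finset.univ)
    (by simpa using hbad)
  have hc1 : ∀ w ∈ K, ∀ z ∈ C, F.Adj w z → g z ≠ c := by
    intro w hw z hz hwz e
    exact hc (Finset.mem_union_left _ (Finset.mem_biUnion.mpr ⟨w, hw,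
      Finset.mem_image.mpr ⟨z, Finset.mem_filter.mpr ⟨hz, hwz⟩, e⟩⟩))
  have hc2 : ∀ w ∈ N, f w ≠ c₀ → f w ≠ c := by
    intro w hw hne e
    exact hc (Finset.mem_union_right _ (Finset.mem_erase.mpr ⟨e ▸ hne,
      Finset.mem_image.mpr ⟨w, hw, e⟩⟩))
  have hcross : ∀ w ∈ S, ∀ z ∈ C, F.Adj w z → f w ≠ Equiv.swap c₀ c (g z) := by
    intro w hw z hz hwz e
    have hwN : w ∈ N := (hN w).mpr ⟨hw, z, hz, hwz⟩
    have e' : g z = Equiv.swap c₀ c (f w) := by rw [e, Equiv.swap_apply_self]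
    by_cases h : f w = c₀
    · rw [h, Equiv.swap_apply_left] at e'
      exact hc1 w (Finset.mem_filter.mpr ⟨hwN, h⟩) z hz hwz e'
    · rw [Equiv.swap_apply_of_ne_of_ne h (hc2 w hwN h)] at e'
      have hwS : w ∈ S \ K := Finset.mem_sdiff.mpr ⟨hw, fun h' => h (Finset.mem_filter.mp h').2⟩
      exact hg w (Finset.mem_union_left _ hwS) z (Finset.mem_union_right _ hz) hwz
        ((hgf w hwS).trans e'.symm)
  have hCS : ∀ z ∈ C, z ∉ S := fun z hz h => Finset.disjoint_left.mp hSC h hz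
  refine ⟨fun x => if x ∈ S then f x else Equiv.swap c₀ c (g x), fun x hx => if_pos hx, ?_⟩
  intro x hx y hy hxy
  rcases Finset.mem_union.mp hx with hx | hx <;> rcases Finset.mem_union.mp hy with hy | hy
  · simpa [hx, hy] using hf x hx y hy hxy
  · simpa [hx, hCS y hy] using hcross x hx y hy hxy
  · simpa [hy, hCS x hx] using (hcross y hy x hx hxy.symm).symm
  · simpa [hCS y hy, hCS x hx] using hg x (Finset.mem_union_right _ hx) y
      (Finset.mem_union_right _ hy) hxy

/-- A partial coloring extends to a connected set `C` as soon as it uses so many colors on the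
boundary of `C` that some color class there must send few edges to `C`. -/
theorem ProperOn.exists_extension_of_injOn {V : Type*} [DecidableEq V] {d R : ℕ}
    {F : SimpleGraph V} [DecidableRel F.Adj] {B S C N K : Finset V} {f : V → Fin d}
    (hf : ProperOn F S f) (hSC : Disjoint S C) (hSB : S ⊆ B) (hCB : C ⊆ B)
    (hdeg : ∀ v ∈ C, (B.filter (F.Adj v)).card ≤ d)
    (hC : ∀ T' ⊆ C, T'.Nonempty → T' ≠ C → ∃ v ∈ T', ∃ u ∈ C, u ∉ T' ∧ F.Adj v u)
    (hN : ∀ w, w ∈ N ↔ w ∈ S ∧ ∃ z ∈ C, F.Adj w z) (hKN : K ⊆ N) (hK : K.card = R + 1)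
    (hfK : Set.InjOn f K)
    (hR : ∀ r, R < r → r ≤ N.card → ∑ w ∈ N, (C.filter (F.Adj w)).card < r * (d + 1 - r)) :
    ∃ g : V → Fin d, (∀ x ∈ S, g x = f x) ∧ ProperOn F (S ∪ C) g := by
  by_contra hno
  have h1 : ∀ c ∈ N.image f,
      d + 1 - (N.image f).card ≤ ∑ w ∈ N with f w = c, (C.filter (F.Adj w)).card := by
    intro c hc
    by_contra h
    exact hno (hf.exists_extension_of_class hSC hSB hCB hdeg hC hN hc (by omega))
  have h2 := Finset.card_nsmul_le_sum _ _ _ h1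
  rw [Finset.sum_fiberwise_of_maps_to (fun w hw => Finset.mem_image_of_mem f hw), smul_eq_mul] at h2
  refine absurd (hR (N.image f).card ?_ Finset.card_image_le) (not_lt.mpr h2)
  have := Finset.card_le_card (Finset.image_subset_image (f := f) hKN)
  rw [Finset.card_image_of_injOn hfK, hK] at this
  omega

/-- Colorings of the pieces of a partition with no edges between pieces can be glued together. -/
theorem ProperOn.exists_glue {V ι : Type*} [DecidableEq V] {d : ℕ} {F : SimpleGraph V}
    {S Z : Finset V} {f : V → Fin d} (hSZ : Disjoint S Z) (hf : ProperOn F S f) (κ : V → ι)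
    (hκ : ∀ x ∈ Z, ∀ y ∈ Z, F.Adj x y → κ x = κ y)
    (hext : ∀ i, ∃ g : V → Fin d, (∀ x ∈ S, g x = f x) ∧
      ∀ x ∈ Z, κ x = i → ∀ y, (y ∈ S ∨ y ∈ Z ∧ κ y = i) → F.Adj x y → g x ≠ g y) :
    ∃ g : V → Fin d, (∀ x ∈ S, g x = f x) ∧ ProperOn F (S ∪ Z) g := by
  choose g hgf hg using hext
  have hZS : ∀ z ∈ Z, z ∉ S := fun z hz h => Finset.disjoint_left.mp hSZ h hz
  have hcross : ∀ x ∈ Z, ∀ y ∈ S, F.Adj x y → g (κ x) x ≠ f y := fun x hx y hy hxy => by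
    rw [← hgf (κ x) y hy]
    exact hg (κ x) x hx rfl y (Or.inl hy) hxy
  refine ⟨fun x => if x ∈ S then f x else g (κ x) x, fun x hx => if_pos hx, ?_⟩
  intro x hx y hy hxy
  rcases Finset.mem_union.mp hx with hx | hx <;> rcases Finset.mem_union.mp hy with hy | hy
  · simpa [hx, hy] using hf x hx y hy hxy
  · simpa [hx, hZS y hy] using (hcross y hy x hx hxy.symm).symm
  · simpa [hy, hZS x hx] using hcross x hx y hy hxy
  · have e := hκ x hx y hy hxy
    simpa [hZS y hy, hZS x hx, e] using hg (κ y) x hx e y (Or.inr ⟨hy, rfl⟩) hxy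

/-- `C` is a connected component of the subgraph of `H` induced on `Z`. -/
structure IsPiece {V : Type*} (H : SimpleGraph V) (Z C : Finset V) : Prop where
  subset : C ⊆ Z
  nonempty : C.Nonempty
  closed : ∀ x ∈ C, ∀ y ∈ Z, H.Adj x y → y ∈ C
  connected : ∀ T ⊆ C, T.Nonempty → T ≠ C → ∃ v ∈ T, ∃ u ∈ C, u ∉ T ∧ H.Adj v u

theorem IsPiece.eq_of_mem {V : Type*} {H : SimpleGraph V} {Z C C' : Finset V}
    (hC : IsPiece H Z C) (hC' : IsPiece H Z C') {x : V} (hx : x ∈ C) (hx' : x ∈ C') : C = C' := by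
  classical
  have key : ∀ {C C' : Finset V}, IsPiece H Z C → IsPiece H Z C' → x ∈ C → x ∈ C' → C ⊆ C' := by
    intro C C' hC hC' hx hx'
    rw [← Finset.inter_eq_left]
    by_contra hne
    obtain ⟨v, hv, u, hu, huT, hvu⟩ := hC.connected _ Finset.inter_subset_left
      ⟨x, Finset.mem_inter.mpr ⟨hx, hx'⟩⟩ hne
    exact huT (Finset.mem_inter.mpr
      ⟨hu, hC'.closed v (Finset.mem_inter.mp hv).2 u (hC.subset hu) hvu⟩)
  exact (key hC hC' hx hx').antisymm (key hC' hC hx' hx)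

open Classical in
/-- The connected components of the subgraph induced on `Z` partition `Z`. -/
theorem exists_isPiece {V : Type*} (H : SimpleGraph V) (Z : Finset V) :
    ∃ κ : V → Finset V, (∀ x ∈ Z, IsPiece H Z (κ x)) ∧ ∀ x ∈ Z, x ∈ κ x := by
  let G : SimpleGraph V := SimpleGraph.fromRel fun x y => H.Adj x y ∧ x ∈ Z ∧ y ∈ Z
  have hG : ∀ x y, G.Adj x y ↔ H.Adj x y ∧ x ∈ Z ∧ y ∈ Z := by
    intro x y
    simp only [G, SimpleGraph.fromRel_adj]
    constructor
    · rintro ⟨-, h | h⟩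
      · exact h
      · exact ⟨h.1.symm, h.2.2, h.2.1⟩
    · exact fun h => ⟨h.1.ne, Or.inl h⟩
  refine ⟨fun x => Z.filter (G.Reachable x), fun x hx => ⟨Finset.filter_subset _ _, ?_, ?_, ?_⟩, ?_⟩
  · exact ⟨x, Finset.mem_filter.mpr ⟨hx, SimpleGraph.Reachable.refl _⟩⟩
  · intro y hy z hz hyz
    obtain ⟨hy, hxy⟩ := Finset.mem_filter.mp hy
    exact Finset.mem_filter.mpr ⟨hz, hxy.trans (((hG y z).mpr ⟨hyz, hy, hz⟩).reachable)⟩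
  · intro T hT ⟨y, hy⟩ hne
    obtain ⟨z, hz, hzT⟩ := Finset.exists_of_ssubset (hT.ssubset_of_ne hne)
    obtain ⟨p⟩ : G.Reachable y z :=
      (Finset.mem_filter.mp (hT hy)).2.symm.trans (Finset.mem_filter.mp hz).2
    obtain ⟨e, -, he, he'⟩ := p.exists_boundary_dart (T : Set V) hy hzT
    have hadj := (hG _ _).mp e.adj
    refine ⟨e.fst, he, e.snd, Finset.mem_filter.mpr ⟨hadj.2.2, ?_⟩, he', hadj.1⟩
    exact (Finset.mem_filter.mp (hT he)).2.trans e.adj.reachable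
  · exact fun x hx => Finset.mem_filter.mpr ⟨hx, SimpleGraph.Reachable.refl _⟩

open Classical in
/-- Joining all pairs inside the sets `Q a` raises the degree of `v` by at most `(q - 1) * m v`. -/
theorem card_filter_adj_sup_le {V α : Type*} [Fintype α] {q : ℕ} (G : SimpleGraph V)
    (Q : α → Finset V) (m : V → ℕ) (hQ : ∀ a, (Q a).card = q)
    (hQm : ∀ v, (Finset.univ.filter fun a => v ∈ Q a).card ≤ m v) (S : Finset V) (v : V) :
    (S.filter ((G ⊔ SimpleGraph.fromRel fun x y => ∃ a, x ∈ Q a ∧ y ∈ Q a).Adj v)).card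
      ≤ (S.filter (G.Adj v)).card + (q - 1) * m v := by
  have hsub : S.filter ((G ⊔ SimpleGraph.fromRel fun x y => ∃ a, x ∈ Q a ∧ y ∈ Q a).Adj v)
      ⊆ S.filter (G.Adj v) ∪
        (Finset.univ.filter fun a => v ∈ Q a).biUnion fun a => (Q a).erase v := by
    intro y hy
    obtain ⟨hy, h⟩ := Finset.mem_filter.mp hy
    rw [SimpleGraph.sup_adj, SimpleGraph.fromRel_adj] at h
    rcases h with h | ⟨hne, ⟨a, h1, h2⟩ | ⟨a, h1, h2⟩⟩
    · exact Finset.mem_union_left _ (Finset.mem_filter.mpr ⟨hy, h⟩)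
    · exact Finset.mem_union_right _ (Finset.mem_biUnion.mpr
        ⟨a, by simpa using h1, Finset.mem_erase.mpr ⟨hne.symm, h2⟩⟩)
    · exact Finset.mem_union_right _ (Finset.mem_biUnion.mpr
        ⟨a, by simpa using h2, Finset.mem_erase.mpr ⟨hne.symm, h1⟩⟩)
  refine (Finset.card_le_card hsub).trans ((Finset.card_union_le _ _).trans ?_)
  refine Nat.add_le_add_left ?_ _
  refine (Finset.card_biUnion_le_card_mul _ _ (q - 1) ?_).trans ?_
  · intro a ha
    rw [Finset.card_erase_of_mem (Finset.mem_filter.mp ha).2, hQ]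
  · rw [mul_comm]
    exact Nat.mul_le_mul_left _ (hQm v)

open Classical in
/-- A coloring making every `Q a` rainbow, obtained by coloring first `W`, then the pieces of `Z`, and
last the rest of `B`. -/
theorem exists_coloring_of_selection {V α : Type*} [Fintype α] {q d : ℕ}
    {H Γ : SimpleGraph V} {B W Z : Finset V} (m : V → ℕ) (Q : α → Finset V)
    (hWB : W ⊆ B) (hZB : Z ⊆ B) (hWZ : Disjoint W Z) (hQB : ∀ a, Q a ⊆ B)
    (hQZ : ∀ a, Disjoint (Q a) Z) (hQ : ∀ a, (Q a).card = q)
    (hQm : ∀ v, (Finset.univ.filter fun a => v ∈ Q a).card ≤ m v)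
    (hdegB : ∀ v ∈ B, (B.filter (H.Adj v)).card ≤ d)
    (hdeg : ∀ v ∈ B, v ∉ Z → v ∉ W → (B.filter (H.Adj v)).card + (q - 1) * m v < d)
    (hΓ : ∀ x ∈ W, ∀ y ∈ W, H.Adj x y → Γ.Adj x y)
    (hW : ∀ w ∈ W, (W.filter (Γ.Adj w)).card + (q - 1) * m w < d)
    (hpiece : ∀ C, IsPiece H Z C →
      (∃ z ∈ C, ∃ u ∈ B, u ∉ W ∧ u ∉ Z ∧ H.Adj z u) ∨
      ∃ R K, K ⊆ W.filter (fun w => ∃ z ∈ C, H.Adj w z) ∧ K.card = R + 1 ∧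
        (∀ x ∈ K, ∀ y ∈ K, x ≠ y → Γ.Adj x y) ∧
        ∀ r, R < r → r ≤ (W.filter fun w => ∃ z ∈ C, H.Adj w z).card →
          ∑ w ∈ W with ∃ z ∈ C, H.Adj w z, (C.filter (H.Adj w)).card < r * (d + 1 - r))
    (hd : 0 < d) :
    ∃ f : V → Fin d, ProperOn H B f ∧ ∀ a, Set.InjOn f (Q a) := by
  set cl : SimpleGraph V := SimpleGraph.fromRel fun x y => ∃ a, x ∈ Q a ∧ y ∈ Q a with hcl
  have hclZ : ∀ x ∈ Z, ∀ y, ¬ cl.Adj x y ∧ ¬ cl.Adj y x := by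
    have : ∀ x ∈ Z, ∀ y, ¬ cl.Adj x y := by
      intro x hx y h
      rw [hcl, SimpleGraph.fromRel_adj] at h
      rcases h.2 with ⟨a, h1, h2⟩ | ⟨a, h1, h2⟩
      · exact Finset.disjoint_left.mp (hQZ a) h1 hx
      · exact Finset.disjoint_left.mp (hQZ a) h2 hx
    exact fun x hx y => ⟨this x hx y, fun h => this x hx y h.symm⟩
  obtain ⟨f₁, -, hf₁⟩ := ProperOn.exists_extension (F := Γ ⊔ cl) (S := ∅) (T := W)
    (f := fun _ => (⟨0, hd⟩ : Fin d)) (by simp [ProperOn]) (Finset.disjoint_empty_left _) (by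
      intro T hT ⟨v, hv⟩
      refine ⟨v, hv, lt_of_le_of_lt ?_ (hW v (hT hv))⟩
      refine (card_filter_adj_sup_le Γ Q m hQ hQm _ v).trans ?_
      rw [Finset.empty_union]
      exact Nat.add_le_add_right (Finset.card_le_card (Finset.filter_subset_filter _ hT)) _)
  rw [Finset.empty_union] at hf₁
  have hf₁H : ProperOn H W f₁ := fun x hx y hy h => hf₁ x hx y hy (Or.inl (hΓ x hx y hy h))
  obtain ⟨κ, hκ, hκmem⟩ := exists_isPiece H Z
  obtain ⟨f₂, hf₂W, hf₂⟩ := ProperOn.exists_glue hWZ hf₁H κ (by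
      intro x hx y hy hxy
      exact (hκ x hx).eq_of_mem (hκ y hy) ((hκ x hx).closed x (hκmem x hx) y hy hxy)
        (hκmem y hy)) (by
      intro C
      by_cases hC : IsPiece H Z C
      · have hWC : Disjoint W C := hWZ.mono_right hC.subset
        have hCB : C ⊆ B := hC.subset.trans hZB
        have hdegC : ∀ v ∈ C, (B.filter (H.Adj v)).card ≤ d := fun v hv => hdegB v (hCB hv)
        obtain ⟨g, hgW, hg⟩ : ∃ g : V → Fin d, (∀ x ∈ W, g x = f₁ x) ∧ ProperOn H (W ∪ C) g := by
          rcases hpiece C hC with ⟨z, hz, u, hu, huW, huZ, hzu⟩ | ⟨R, K, hKN, hK, hKΓ, hR⟩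
          · refine hf₁H.exists_extension_of_boundary hWC hWB hCB hdegC fun T hT hne => ?_
            by_cases h : T = C
            · exact ⟨z, h ▸ hz, u, hu, huW, fun h' => huZ (hC.subset (hT h')), hzu⟩
            · obtain ⟨v, hv, u, hu, huT, hvu⟩ := hC.connected T hT hne h
              exact ⟨v, hv, u, hCB hu, fun h => Finset.disjoint_left.mp hWC h hu, huT, hvu⟩
          · refine hf₁H.exists_extension_of_injOn hWC hWB hCB hdegC hC.connected
              (fun w => Finset.mem_filter) hKN hK ?_ hR
            intro x hx y hy hxy
            by_contra hne
            exact hf₁ x (Finset.mem_filter.mp (hKN hx)).1 y (Finset.mem_filter.mp (hKN hy)).1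
              (Or.inl (hKΓ x hx y hy hne)) hxy
        refine ⟨g, hgW, ?_⟩
        rintro x hx rfl y hy hxy
        refine hg x (Finset.mem_union_right _ (hκmem x hx)) y ?_ hxy
        rcases hy with hy | ⟨hy, e⟩
        · exact Finset.mem_union_left _ hy
        · exact Finset.mem_union_right _ (e ▸ hκmem y hy)
      · exact ⟨f₁, fun _ _ => rfl, fun x hx e => absurd (e ▸ hκ x hx) hC⟩)
  have hf₂' : ProperOn (H ⊔ cl) (W ∪ Z) f₂ := by
    intro x hx y hy hxy
    rcases Finset.mem_union.mp hx with hx' | hx'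
    · rcases Finset.mem_union.mp hy with hy' | hy'
      · rw [hf₂W x hx', hf₂W y hy']
        refine hf₁ x hx' y hy' ?_
        exact hxy.imp (hΓ x hx' y hy') id
      · exact hf₂ x hx y hy (hxy.resolve_right (hclZ y hy' x).2)
    · exact hf₂ x hx y hy (hxy.resolve_right (hclZ x hx' y).1)
  have hWZB : W ∪ Z ⊆ B := Finset.union_subset hWB hZB
  obtain ⟨f, -, hf⟩ := hf₂'.exists_extension (T := B \ (W ∪ Z)) Finset.disjoint_sdiff (by
      intro T hT ⟨v, hv⟩
      obtain ⟨hvB, hv'⟩ := Finset.mem_sdiff.mp (hT hv)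
      rw [Finset.mem_union, not_or] at hv'
      refine ⟨v, hv, lt_of_le_of_lt ?_ (hdeg v hvB hv'.2 hv'.1)⟩
      refine (card_filter_adj_sup_le H Q m hQ hQm _ v).trans ?_
      refine Nat.add_le_add_right (Finset.card_le_card (Finset.filter_subset_filter _ ?_)) _
      exact Finset.union_subset hWZB (hT.trans Finset.sdiff_subset))
  rw [Finset.union_sdiff_of_subset hWZB] at hf
  refine ⟨f, fun x hx y hy h => hf x hx y hy (Or.inl h), fun a x hx y hy hxy => ?_⟩
  by_contra hne
  refine hf x (hQB a hx) y (hQB a hy) (Or.inr ?_) hxy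
  rw [hcl, SimpleGraph.fromRel_adj]
  exact ⟨hne, Or.inl ⟨a, hx, hy⟩⟩

open Classical in
theorem sum_card_filter_piece_le {V : Type*} {H : SimpleGraph V} {Z : Finset V}
    (P : Finset (Finset V)) (hP : ∀ C ∈ P, IsPiece H Z C) (w : V) :
    ∑ C ∈ P, (C.filter (H.Adj w)).card ≤ (Z.filter (H.Adj w)).card := by
  rw [← Finset.card_biUnion]
  · refine Finset.card_le_card (Finset.biUnion_subset.mpr fun C hC => ?_)
    exact Finset.filter_subset_filter _ (hP C hC).subset
  · intro C hC C' hC' hne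
    refine Finset.disjoint_left.mpr fun x hx hmem => ?_
    exact hne ((hP C hC).eq_of_mem (hP C' hC') (Finset.mem_filter.mp hx).1
      (Finset.mem_filter.mp hmem).1)

/-- Signed coins giving opposite values to prescribed disjoint pairs. -/
theorem exists_signed_coins {V ι : Type*} (s : Set ι) (x y : ι → V)
    (hxy : ∀ i ∈ s, x i ≠ y i)
    (hdisj : ∀ i ∈ s, ∀ j ∈ s, i ≠ j → x i ≠ x j ∧ x i ≠ y j ∧ y i ≠ y j) :
    ∃ (ρ : V → V) (σ : V → Bool), (∀ v w, ρ v = ρ w → σ v = σ w → v = w) ∧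
      ∀ i ∈ s, ∀ ω : V → Bool, xor (ω (ρ (y i))) (σ (y i)) ≠ xor (ω (ρ (x i))) (σ (x i)) := by
  classical
  have hx : ∀ i ∈ s, ¬ ∃ j ∈ s, y j = x i := by
    rintro i hi ⟨j, hj, e⟩
    by_cases h : i = j
    · subst h
      exact hxy i hi e.symm
    · exact (hdisj i hi j hj h).2.1 e.symm
  refine ⟨fun v => if h : ∃ j ∈ s, y j = v then x h.choose else v,
    fun v => decide (∃ j ∈ s, y j = v), ?_, ?_⟩
  · intro v w h1 h2
    by_cases hv : ∃ j ∈ s, y j = v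
    · have hw : ∃ j ∈ s, y j = w := by
        by_contra hw
        simp [hv, hw] at h2
      simp only [hv, hw, dif_pos] at h1
      have e : hv.choose = hw.choose := by
        by_contra hne
        exact (hdisj _ hv.choose_spec.1 _ hw.choose_spec.1 hne).1 h1
      rw [← hv.choose_spec.2, ← hw.choose_spec.2, e]
    · have hw : ¬ ∃ j ∈ s, y j = w := by
        intro hw
        simp [hv, hw] at h2
      simpa only [hv, hw, dif_neg, not_false_eq_true] using h1
  · intro i hi ω
    have hy : ∃ j ∈ s, y j = y i := ⟨i, hi, rfl⟩
    have e : x hy.choose = x i := by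
      by_cases h : hy.choose = i
      · rw [h]
      · have h1 := hy.choose_spec
        exact absurd h1.2.symm (hdisj i hi _ h1.1 (Ne.symm h)).2.2
    simp only [hy, hx i hi, dif_pos, dif_neg, not_false_eq_true, e]
    simp

open Classical in
/-- The main theorem in terms of natural number degree bounds. -/
theorem exists_coloring_of_degree_bounds {V : Type*} [Fintype V] {q d : ℕ} (hq : 4 ≤ q)
    (hd : d + q + 8 = q ^ 3 + 2 * q ^ 2) (H : SimpleGraph V) (A B : Finset V)
    (hcover : ∀ v, v ∈ A ∨ v ∈ B) (hA : A.Nonempty) (hdisj : Disjoint A B)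
    (hconn : H.Connected)
    (hAdeg : ∀ a ∈ A, d ≤ (B.filter (H.Adj a)).card)
    (hdegB : ∀ v ∈ B, (B.filter (H.Adj v)).card ≤ d)
    (hdA : ∀ v ∈ B, (A.filter (H.Adj v)).card ≤ q * (d - (B.filter (H.Adj v)).card)) :
    ∃ f : V → Fin d, ProperOn H B f ∧
      ∀ a ∈ A, ∃ Q ⊆ B.filter (H.Adj a), Q.card = q ∧ Set.InjOn f Q := by
  have hd0 : 0 < d := by nlinarith
  set t : V → ℕ := fun v => d - (B.filter (H.Adj v)).card with ht
  set Z := B.filter fun v => ∀ a ∈ A, ¬ H.Adj v a with hZ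
  set L := B.filter fun v => v ∉ Z ∧ t v ≤ (q - 1) ^ 2 with hL
  have hZB : Z ⊆ B := Finset.filter_subset _ _
  have hLB : L ⊆ B := Finset.filter_subset _ _
  have hLZ : ∀ v ∈ L, v ∉ Z := fun v hv => (Finset.mem_filter.mp hv).2.1
  have hdt : ∀ v ∈ B, (B.filter (H.Adj v)).card + t v = d := fun v hv =>
    Nat.add_sub_of_le (hdegB v hv)
  have ht1 : ∀ v ∈ B, v ∉ Z → 1 ≤ t v := by
    intro v hv hvZ
    have : ∃ a ∈ A, H.Adj v a := by
      by_contra h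
      exact hvZ (Finset.mem_filter.mpr ⟨hv, fun a ha h' => h ⟨a, ha, h'⟩⟩)
    obtain ⟨a, ha, hva⟩ := this
    have h1 : 0 < (A.filter (H.Adj v)).card :=
      Finset.card_pos.mpr ⟨a, Finset.mem_filter.mpr ⟨ha, hva⟩⟩
    exact Nat.pos_of_mul_pos_left (h1.trans_le (hdA v hv))
  have hN : ∀ a ∈ A, ∃ N ⊆ B.filter (H.Adj a), N.card = d := fun a ha =>
    Finset.exists_subset_card_eq (hAdeg a ha)
  choose! N hNsub hNcard using hN
  have hNB : ∀ a ∈ A, ∀ v ∈ N a, v ∈ B ∧ H.Adj a v := fun a ha v hv =>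
    Finset.mem_filter.mp (hNsub a ha hv)
  have hNZ : ∀ a ∈ A, ∀ v ∈ N a, v ∉ Z := fun a ha v hv hvZ =>
    (Finset.mem_filter.mp hvZ).2 a ha (hNB a ha v hv).2.symm
  have hcol : ∀ v, (A.filter fun a => v ∈ N a).card ≤ q * t v := by
    intro v
    by_cases hv : v ∈ B
    · refine (Finset.card_le_card fun a ha => ?_).trans (hdA v hv)
      obtain ⟨ha, h⟩ := Finset.mem_filter.mp ha
      exact Finset.mem_filter.mpr ⟨ha, (hNB a ha v h).2.symm⟩
    · rw [Finset.card_eq_zero.mpr (Finset.filter_eq_empty_iff.mpr fun a ha h =>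
        hv (hNB a ha v h).1)]
      exact Nat.zero_le _
  have hdegZ : ∀ v ∈ B, (L.filter (H.Adj v)).card + (Z.filter (H.Adj v)).card
      ≤ (B.filter (H.Adj v)).card := by
    intro v _
    rw [← Finset.card_union_of_disjoint]
    · exact Finset.card_le_card (Finset.union_subset (Finset.filter_subset_filter _ hLB)
        (Finset.filter_subset_filter _ hZB))
    · refine Finset.disjoint_left.mpr fun x hx hx' => ?_
      exact hLZ x (Finset.mem_filter.mp hx).1 (Finset.mem_filter.mp hx').1
  let e : V → Finset V → ℕ := fun w C => (C.filter (H.Adj w)).card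
  let NC : Finset V → Finset V := fun C => L.filter fun w => ∃ z ∈ C, H.Adj w z
  let G : Finset V → Finset V := fun C => L.filter fun w => d < 2 * e w C
  have he : ∀ P : Finset (Finset V), (∀ C ∈ P, IsPiece H Z C) → ∀ w,
      ∑ C ∈ P, e w C ≤ (Z.filter (H.Adj w)).card := sum_card_filter_piece_le
  have heB : ∀ w ∈ L, ∀ C, IsPiece H Z C → e w C < d := by
    intro w hw C hC
    have h1 := he {C} (by simpa using hC) w
    rw [Finset.sum_singleton] at h1
    have h2 := hdegZ w (hLB hw)
    have h3 := hdt w (hLB hw)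
    have h4 := ht1 w (hLB hw) (hLZ w hw)
    omega
  have hG : ∀ C C', IsPiece H Z C → IsPiece H Z C' → ∀ w, w ∈ G C → w ∈ G C' → C = C' := by
    intro C C' hC hC' w hw hw'
    by_contra hne
    have h1 := he {C, C'} (by simp [hC, hC']) w
    rw [Finset.sum_pair hne] at h1
    obtain ⟨hwL, h2⟩ := Finset.mem_filter.mp hw
    have h3 := (Finset.mem_filter.mp hw').2
    have h4 := hdegZ w (hLB hwL)
    have h5 := hdegB w (hLB hwL)
    omega
  have hpair : ∀ C ∈ {C | IsPiece H Z C ∧ 1 < (G C).card}, ∃ x y, x ∈ G C ∧ y ∈ G C ∧ x ≠ y := by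
    rintro C ⟨-, h⟩
    obtain ⟨x, hx, y, hy, hxy⟩ := Finset.one_lt_card.mp h
    exact ⟨x, y, hx, hy, hxy⟩
  have : Nonempty V := hA.to_type
  choose! x y hx hy hxy using hpair
  obtain ⟨ρ, σ, hinj, hopp⟩ := exists_signed_coins {C | IsPiece H Z C ∧ 1 < (G C).card} x y hxy (by
    intro C hC C' hC' hne
    refine ⟨fun h => ?_, fun h => ?_, fun h => ?_⟩
    · exact hne (hG C C' hC.1 hC'.1 _ (hx C hC) (h ▸ hx C' hC'))
    · exact hne (hG C C' hC.1 hC'.1 _ (hx C hC) (h ▸ hy C' hC'))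
    · exact hne (hG C C' hC.1 hC'.1 _ (hy C hC) (h ▸ hy C' hC')))
  have hthr : ∀ C ∈ {C | IsPiece H Z C ∧ (NC C).Nonempty ∧ (G C).card ≤ 1 ∧ 2 * (NC C).card ≤ d},
      ∃ (R : ℕ) (K : Finset V), K ⊆ NC C ∧ K.card = R + 1 ∧ (∀ w ∈ K, R ≤ e w C) ∧
        ∀ r, R < r → r ≤ (NC C).card → ∑ w ∈ NC C, e w C < r * (d + 1 - r) := by
    rintro C ⟨hC, hne, hcard, hle⟩
    refine exists_threshold_subset (NC C) (fun w => e w C) d hne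
      (fun w hw => heB w (Finset.mem_filter.mp hw).1 C hC) ?_ hle
    exact (Finset.card_le_card (Finset.filter_subset_filter _ (Finset.filter_subset _ _))).trans
      hcard
  choose! R K hKN hK hKR hR using hthr
  set T : Set (Finset V) :=
    {C | IsPiece H Z C ∧ (NC C).Nonempty ∧ (G C).card ≤ 1 ∧ 2 * (NC C).card ≤ d} with hT
  obtain ⟨Γ, hΓdef⟩ : ∃ Γ : SimpleGraph V, ∀ u v, Γ.Adj u v ↔
      H.Adj u v ∨ u ≠ v ∧ ∃ C ∈ T, u ∈ K C ∧ v ∈ K C := by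
    refine ⟨H ⊔ SimpleGraph.fromRel fun u v => ∃ C ∈ T, u ∈ K C ∧ v ∈ K C, fun u v => ?_⟩
    rw [SimpleGraph.sup_adj, SimpleGraph.fromRel_adj]
    refine or_congr_right (and_congr_right fun _ => or_iff_left_of_imp ?_)
    rintro ⟨C, hC, h1, h2⟩
    exact ⟨C, hC, h2, h1⟩
  have hΓ : ∀ w ∈ L, (L.filter (Γ.Adj w)).card + t w ≤ d := by
    intro w hw
    refine le_trans (Nat.add_le_add_right (le_trans ?_ (hdegZ w (hLB hw))) _) (hdt w (hLB hw)).le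
    have hsub : L.filter (Γ.Adj w) ⊆ L.filter (H.Adj w) ∪
        (Finset.univ.filter fun C => C ∈ T ∧ w ∈ K C).biUnion fun C => (K C).erase w := by
      intro v hv
      obtain ⟨hv, h⟩ := Finset.mem_filter.mp hv
      rcases (hΓdef w v).mp h with h | ⟨hne, C, hC, h1, h2⟩
      · exact Finset.mem_union_left _ (Finset.mem_filter.mpr ⟨hv, h⟩)
      · exact Finset.mem_union_right _ (Finset.mem_biUnion.mpr
          ⟨C, Finset.mem_filter.mpr ⟨Finset.mem_univ _, hC, h1⟩,
            Finset.mem_erase.mpr ⟨hne.symm, h2⟩⟩)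
    refine (Finset.card_le_card hsub).trans ((Finset.card_union_le _ _).trans ?_)
    refine Nat.add_le_add_left (Finset.card_biUnion_le.trans ?_) _
    refine (Finset.sum_le_sum fun C hC => ?_).trans
      (he (Finset.univ.filter fun C => C ∈ T ∧ w ∈ K C)
        (fun C hC => (Finset.mem_filter.mp hC).2.1.1) w)
    obtain ⟨-, hCT, hwK⟩ := Finset.mem_filter.mp hC
    rw [Finset.card_erase_of_mem hwK, hK C hCT]
    exact hKR C hCT w hwK
  let 𝒞 : Finset (Finset V) := Finset.univ.filter fun C => IsPiece H Z C ∧ d < 2 * (NC C).card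
  have hS : ∀ C ∈ 𝒞, ∃ S ⊆ NC C, S.card = d / 2 + 1 := by
    intro C hC
    have := (Finset.mem_filter.mp hC).2.2
    exact Finset.exists_subset_card_eq (by omega)
  choose! S hSN hScard using hS
  obtain ⟨ω, hω1, hω2, hω3⟩ := exists_marking hq hd ρ σ hinj t L A
    (fun v hv => ⟨ht1 v (hLB hv) (hLZ v hv), (Finset.mem_filter.mp hv).2.2⟩) Γ hΓ N hNcard
    (fun a ha v hv hvL => by
      by_contra h
      exact hvL (Finset.mem_filter.mpr ⟨(hNB a ha v hv).1, hNZ a ha v hv, not_lt.mp h⟩))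
    hcol 𝒞 S hScard (fun v => by
      by_cases hv : v ∈ L
      · have h1 := he (𝒞.filter fun C => v ∈ S C)
          (fun C hC => (Finset.mem_filter.mp (Finset.mem_filter.mp hC).1).2.1) v
        have h2 : (𝒞.filter fun C => v ∈ S C).card ≤ ∑ C ∈ 𝒞 with v ∈ S C, e v C := by
          rw [Finset.card_eq_sum_ones]
          refine Finset.sum_le_sum fun C hC => ?_
          obtain ⟨hC, hvS⟩ := Finset.mem_filter.mp hC
          obtain ⟨z, hz, hvz⟩ := (Finset.mem_filter.mp (hSN C hC hvS)).2
          exact Finset.card_pos.mpr ⟨z, Finset.mem_filter.mpr ⟨hz, hvz⟩⟩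
        have h3 := hdegZ v (hLB hv)
        have h4 := hdegB v (hLB hv)
        omega
      · rw [Finset.card_eq_zero.mpr (Finset.filter_eq_empty_iff.mpr fun C hC h =>
          hv (Finset.mem_filter.mp (hSN C hC h)).1)]
        exact Nat.zero_le _)
  let w : V → Bool := fun v => xor (ω (ρ v)) (σ v)
  set W := L.filter fun v => w v = true with hWdef
  have hWL : W ⊆ L := Finset.filter_subset _ _
  obtain ⟨Q, hQcard, hQN, hQm⟩ := exists_selection_of_weight hq A N t w hω2 hcol
  obtain ⟨f, hf, hfQ⟩ := exists_coloring_of_selection (q := q) (d := d) (H := H) (Γ := Γ) (B := B)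
    (W := W) (Z := Z) (fun v => capacity q (t v) (w v)) Q (hWL.trans hLB) hZB
    (Finset.disjoint_left.mpr fun v hv => hLZ v (hWL hv))
    (fun a v hv => (hNB a a.2 v (hQN a hv)).1)
    (fun a => Finset.disjoint_left.mpr fun v hv => hNZ a a.2 v (hQN a hv)) hQcard hQm hdegB
    (by
      intro v hv hvZ hvW
      have h1 := capacity_false_mul_lt (q := q) (ht1 v hv hvZ)
      have h2 : capacity q (t v) (w v) = capacity q (t v) false := by
        by_cases hvL : v ∈ L
        · have : w v = false := by
            by_contra h
            exact hvW (Finset.mem_filter.mpr ⟨hvL, by simpa using h⟩)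
          rw [this]
        · have : ¬ t v ≤ (q - 1) ^ 2 := fun h => hvL (Finset.mem_filter.mpr ⟨hv, hvZ, h⟩)
          simp [capacity, this]
      have h3 := hdt v hv
      simp only [h2]
      omega)
    (fun u _ v _ h => (hΓdef u v).mpr (Or.inl h))
    (by
      intro v hv
      have h1 := hω1 v (hWL hv)
      rw [Finset.filter_comm] at h1
      have h2 : w v = true := (Finset.mem_filter.mp hv).2
      simp only [h2]
      exact h1)
    (by
      intro C hC
      by_cases hout : ∃ z ∈ C, ∃ u ∈ B, u ∉ W ∧ u ∉ Z ∧ H.Adj z u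
      · exact Or.inl hout
      right
      have hin : ∀ z ∈ C, ∀ u ∈ B, u ∉ Z → H.Adj z u → u ∈ W := by
        intro z hz u hu huZ hzu
        by_contra h
        exact hout ⟨z, hz, u, hu, h, huZ, hzu⟩
      have hNW : NC C = W.filter fun v => ∃ z ∈ C, H.Adj v z := by
        ext v
        simp only [NC, Finset.mem_filter]
        constructor
        · rintro ⟨hv, z, hz, hvz⟩
          exact ⟨hin z hz v (hLB hv) (hLZ v hv) hvz.symm, z, hz, hvz⟩
        · rintro ⟨hv, h⟩
          exact ⟨hWL hv, h⟩
      have hNCW : NC C ⊆ W := by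
        rw [hNW]
        exact Finset.filter_subset _ _
      have hGN : G C ⊆ NC C := by
        intro v hv
        obtain ⟨hvL, h⟩ := Finset.mem_filter.mp hv
        obtain ⟨z, hz⟩ := Finset.card_pos.mp (show 0 < e v C by omega)
        exact Finset.mem_filter.mpr ⟨hvL, z, Finset.mem_filter.mp hz⟩
      have hG1 : (G C).card ≤ 1 := by
        by_contra h
        have hCm : C ∈ {C | IsPiece H Z C ∧ 1 < (G C).card} := ⟨hC, not_le.mp h⟩
        refine hopp C hCm ω ?_
        have h1 : w (x C) = true := (Finset.mem_filter.mp (hNCW (hGN (hx C hCm)))).2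
        have h2 : w (y C) = true := (Finset.mem_filter.mp (hNCW (hGN (hy C hCm)))).2
        exact h2.trans h1.symm
      have hNd : 2 * (NC C).card ≤ d := by
        by_contra h
        have hC𝒞 : C ∈ 𝒞 := Finset.mem_filter.mpr ⟨Finset.mem_univ _, hC, not_le.mp h⟩
        obtain ⟨v, hv, hvf⟩ := hω3 C hC𝒞
        have h1 : w v = true := (Finset.mem_filter.mp (hNCW (hSN C hC𝒞 hv))).2
        exact absurd (h1.symm.trans hvf) (by simp)
      have hNne : (NC C).Nonempty := by
        obtain ⟨z, hz⟩ := hC.nonempty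
        obtain ⟨a, ha⟩ := hA
        obtain ⟨p⟩ := hconn.preconnected z a
        obtain ⟨e, -, he, he'⟩ := p.exists_boundary_dart (C : Set V) hz
          (fun h => Finset.disjoint_left.mp hdisj ha (hZB (hC.subset h)))
        have hfst := hC.subset he
        have hsnd : e.snd ∈ B := by
          refine (hcover e.snd).resolve_left fun h => ?_
          exact (Finset.mem_filter.mp hfst).2 _ h e.adj
        have hsndZ : e.snd ∉ Z := fun h => he' (hC.closed _ he _ h e.adj)
        exact ⟨e.snd, Finset.mem_filter.mpr
          ⟨hWL (hin _ he _ hsnd hsndZ e.adj), e.fst, he, e.adj.symm⟩⟩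
      have hCT : C ∈ T := ⟨hC, hNne, hG1, hNd⟩
      rw [← hNW]
      refine ⟨R C, K C, hKN C hCT, hK C hCT, ?_, hR C hCT⟩
      intro u hu v hv hne
      exact (hΓdef u v).mpr (Or.inr ⟨hne, C, hCT, hu, hv⟩)) hd0
  exact ⟨f, hf, fun a ha => ⟨Q ⟨a, ha⟩, (hQN ⟨a, ha⟩).trans (hNsub a ha), hQcard _, hfQ _⟩⟩

/-- **Lemma 1.** Let `q ≥ 4` and `d = q³ + 2q² − q − 8`. Let `A` and `B` be
nonempty disjoint sets and `H` a connected simple graph on `A ∪ B`. Assume no two vertices of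
`A` are adjacent, every vertex of `A` has degree at least `d` in `H`, and every `v ∈ B`
satisfies `deg_{H[B]}(v) + ⌈d_A(v)/q⌉ ≤ d`. Then the induced subgraph `H[B]` admits a proper
`d`-coloring such that every vertex of `A` has at least `q` distinct colors among its
neighbors in `B`. -/
theorem lemma_one {V : Type*} [Fintype V] [DecidableEq V]
    (H : SimpleGraph V) [DecidableRel H.Adj]
    (q d : ℕ) (hq : 4 ≤ q) (hd : (d : ℤ) = q ^ 3 + 2 * q ^ 2 - q - 8)
    (A B : Finset V) (hdisj : Disjoint A B) (hcover : A ∪ B = Finset.univ)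
    (hA : A.Nonempty) (hB : B.Nonempty) (hconn : H.Connected)
    (hAindep : ∀ a ∈ A, ∀ b ∈ A, ¬ H.Adj a b)
    (hAdeg : ∀ a ∈ A, d ≤ H.degree a)
    (hBdeg : ∀ v ∈ B, ((H.neighborFinset v ∩ B).card : ℤ) +
        ⌈((H.neighborFinset v ∩ A).card : ℚ) / (q : ℚ)⌉ ≤ (d : ℤ)) :
    ∃ f : V → Fin d,
      (∀ x ∈ B, ∀ y ∈ B, H.Adj x y → f x ≠ f y) ∧
      (∀ a ∈ A, q ≤ ((H.neighborFinset a ∩ B).image f).card) := by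
  classical
  have hmem : ∀ v, v ∈ A ∨ v ∈ B := fun v =>
    Finset.mem_union.mp (hcover ▸ Finset.mem_univ v)
  have hinter : ∀ (S : Finset V) (v : V), H.neighborFinset v ∩ S = S.filter (H.Adj v) := by
    intro S v
    ext u
    simp [and_comm]
  have hq0 : (0 : ℚ) < q := by
    exact_mod_cast (show 0 < q by omega)
  have hd' : d + q + 8 = q ^ 3 + 2 * q ^ 2 := by
    zify
    linarith
  have hdegB : ∀ v ∈ B, (B.filter (H.Adj v)).card ≤ d := by
    intro v hv
    have h1 := hBdeg v hv
    have h2 : (0 : ℤ) ≤ ⌈((H.neighborFinset v ∩ A).card : ℚ) / (q : ℚ)⌉ :=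
      Int.ceil_nonneg (by positivity)
    rw [← hinter]
    omega
  have hdA : ∀ v ∈ B,
      (A.filter (H.Adj v)).card ≤ q * (d - (B.filter (H.Adj v)).card) := by
    intro v hv
    have h1 := hBdeg v hv
    have h2 := hdegB v hv
    rw [hinter, hinter] at h1
    have h3 : ⌈((A.filter (H.Adj v)).card : ℚ) / (q : ℚ)⌉
        ≤ ((d - (B.filter (H.Adj v)).card : ℕ) : ℤ) := by
      omega
    rw [Int.ceil_le, div_le_iff₀ hq0, mul_comm] at h3
    exact_mod_cast h3
  have hAdegB : ∀ a ∈ A, d ≤ (B.filter (H.Adj a)).card := by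
    intro a ha
    refine (hAdeg a ha).trans (Finset.card_le_card fun u hu => ?_)
    have hau := (H.mem_neighborFinset a u).mp hu
    exact Finset.mem_filter.mpr
      ⟨(hmem u).resolve_left fun h => hAindep a ha u h hau, hau⟩
  obtain ⟨f, hf, hfA⟩ := exists_coloring_of_degree_bounds hq hd' H A B hmem hA hdisj hconn
    (fun a ha => by convert hAdegB a ha) (fun v hv => by convert hdegB v hv)
    (fun v hv => by convert hdA v hv)
  refine ⟨f, fun x hx y hy hxy => hf x hx y hy hxy, fun a ha => ?_⟩
  obtain ⟨Q, hQ, hQcard, hQf⟩ := hfA a ha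
  rw [← hQcard, ← Finset.card_image_of_injOn hQf, hinter]
  refine Finset.card_le_card (Finset.image_subset_image fun u hu => ?_)
  have huQ := hQ hu
  simp only [Finset.mem_filter] at huQ ⊢
  exact huQ
end

section
/- Let G be a finite simple graph with maximum degree at most D that contains no clique on D+1 vertices, and let D = α_1 + ... + α_{c+1} where each α_i ≥ 2 is an integer. Then every coloring ξ ∈ Ω contains no large clique; equivalently, there exists a Φ-minimizing coloring of V(G) with colors {1,…,c+1} having no large clique, and every Φ-minimizing coloring with the fewest large cliques has zero large cliques. -/
open scoped Classical

/-- The number of edges of `G` both of whose endpoints have color `i` under `ξ`. -/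
noncomputable def monoEdges {V : Type*} [Fintype V] [DecidableEq V] (G : SimpleGraph V)
    [DecidableRel G.Adj] {k : ℕ} (ξ : V → Fin k) (i : Fin k) : ℕ :=
  (G.edgeFinset.filter fun e => ∀ v ∈ e, ξ v = i).card

/-- `Φ(ξ) = Σ_i f_i(ξ)/α_i` as a rational number. -/
noncomputable def Phi {V : Type*} [Fintype V] [DecidableEq V] (G : SimpleGraph V)
    [DecidableRel G.Adj] {k : ℕ} (α : Fin k → ℕ) (ξ : V → Fin k) : ℚ :=
  ∑ i, (monoEdges G ξ i : ℚ) / (α i : ℚ)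

/-- A *large clique* of the coloring `ξ`: a set of `α_i + 1` pairwise adjacent vertices all of
color `i`, for some color `i`. -/
def IsLargeClique {V : Type*} (G : SimpleGraph V) {k : ℕ} (α : Fin k → ℕ)
    (ξ : V → Fin k) (s : Finset V) : Prop :=
  ∃ i : Fin k, G.IsNClique (α i + 1) s ∧ ∀ v ∈ s, ξ v = i

/-- `φ(ξ)`: the number of large cliques of the coloring `ξ`. -/
noncomputable def numLargeCliques {V : Type*} (G : SimpleGraph V) {k : ℕ}
    (α : Fin k → ℕ) (ξ : V → Fin k) : ℕ :=
  Set.ncard {s : Finset V | IsLargeClique G α ξ s}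

section LargeCliques

open Finset Function

variable {V : Type*} [Fintype V] {G : SimpleGraph V} {k : ℕ} {α : Fin k → ℕ} {ξ : V → Fin k}

/-- The neighbors of `x` having color `b` under `ξ`. -/
noncomputable def colorNbrs (G : SimpleGraph V) (ξ : V → Fin k) (x : V) (b : Fin k) : Finset V :=
  univ.filter fun v => G.Adj x v ∧ ξ v = b

lemma mem_colorNbrs {x v : V} {b : Fin k} :
    v ∈ colorNbrs G ξ x b ↔ G.Adj x v ∧ ξ v = b := by
  simp [colorNbrs]

lemma sum_card_colorNbrs [DecidableRel G.Adj] (x : V) :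
    ∑ b, (colorNbrs G ξ x b).card = G.degree x := by
  rw [← SimpleGraph.card_neighborFinset_eq_degree,
    card_eq_sum_card_fiberwise (f := ξ) (t := univ) (by simp)]
  refine sum_congr rfl fun b _ => congrArg card ?_
  ext v
  simp [mem_colorNbrs]

variable [DecidableEq V]

lemma colorNbrs_update (x : V) (b i : Fin k) :
    colorNbrs G (update ξ x b) x i = colorNbrs G ξ x i := by
  ext v
  simp only [mem_colorNbrs]
  refine and_congr_right fun h => ?_
  rw [update_of_ne h.ne']

variable [DecidableRel G.Adj]

lemma monoEdges_eq_add (x : V) (i : Fin k) :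
    monoEdges G ξ i = (G.edgeFinset.filter fun e => x ∉ e ∧ ∀ v ∈ e, ξ v = i).card
      + if ξ x = i then (colorNbrs G ξ x i).card else 0 := by
  unfold monoEdges
  rw [← card_filter_add_card_filter_not (fun e => x ∉ e), filter_filter, filter_filter]
  congr 1
  · congr 1
    ext e
    simp only [mem_filter]
    tauto
  · split_ifs with h
    · symm
      refine card_bij (fun v _ => s(x, v)) ?_ ?_ ?_
      · intro v hv
        rw [mem_colorNbrs] at hv
        simp [hv.1, hv.2, h]
      · intro v _ w _ hvw
        exact Sym2.congr_right.mp hvw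
      · intro e he
        simp only [mem_filter, SimpleGraph.mem_edgeFinset, not_not] at he
        obtain ⟨he, hc, hx⟩ := he
        obtain ⟨v, rfl⟩ := Sym2.mem_iff_exists.mp hx
        exact ⟨v, mem_colorNbrs.mpr ⟨he, hc v (Sym2.mem_mk_right x v)⟩, rfl⟩
    · rw [card_eq_zero, filter_eq_empty_iff]
      rintro e - ⟨hc, hx⟩
      exact h (hc x (not_not.mp hx))

/-- Up to a constant, `Φ` as a function of the color `b` of `x` is the number of neighbors of `x`
of color `b`, divided by `α b`. -/
lemma exists_Phi_update_eq (G : SimpleGraph V) [DecidableRel G.Adj] (α : Fin k → ℕ)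
    (ξ : V → Fin k) (x : V) :
    ∃ R : ℚ, ∀ b, Phi G α (update ξ x b) = R + ((colorNbrs G ξ x b).card : ℚ) / (α b : ℚ) := by
  refine ⟨∑ i, ((G.edgeFinset.filter fun e => x ∉ e ∧ ∀ v ∈ e, ξ v = i).card : ℚ) / (α i : ℚ),
    fun b => ?_⟩
  have key : ∀ i, (G.edgeFinset.filter fun e => x ∉ e ∧ ∀ v ∈ e, update ξ x b v = i)
      = G.edgeFinset.filter fun e => x ∉ e ∧ ∀ v ∈ e, ξ v = i := by
    intro i
    refine filter_congr fun e _ => and_congr_right fun hx => ?_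
    refine forall₂_congr fun v hv => ?_
    rw [update_of_ne (by rintro rfl; exact hx hv)]
  simp only [Phi, monoEdges_eq_add x, key, colorNbrs_update, update_self]
  simp only [Nat.cast_add, add_div, sum_add_distrib]
  congr 1
  rw [sum_eq_single b] <;> simp +contextual [eq_comm]

/-- `ξ` lies in `Ω`, and `K` is a large clique of `ξ` of color `a`. -/
structure OmegaClique (G : SimpleGraph V) [DecidableRel G.Adj] (α : Fin k → ℕ) (ξ : V → Fin k)
    (a : Fin k) (K : Finset V) : Prop where
  Phi_le : ∀ ψ : V → Fin k, Phi G α ξ ≤ Phi G α ψ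
  num_le : ∀ ψ : V → Fin k, (∀ χ : V → Fin k, Phi G α ψ ≤ Phi G α χ) →
    numLargeCliques G α ξ ≤ numLargeCliques G α ψ
  isNClique : G.IsNClique (α a + 1) K
  color : ∀ v ∈ K, ξ v = a

/-- The hypotheses on the graph and on the color capacities. -/
structure Capacities (G : SimpleGraph V) [DecidableRel G.Adj] (α : Fin k → ℕ) : Prop where
  two_le : ∀ i, 2 ≤ α i
  degree_le : ∀ v, G.degree v ≤ ∑ i, α i

namespace OmegaClique

variable {a b : Fin k} {K : Finset V} {x : V}

lemma adj (hK : OmegaClique G α ξ a K) {u v : V} (hu : u ∈ K) (hv : v ∈ K) (huv : u ≠ v) :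
    G.Adj u v :=
  hK.isNClique.isClique hu hv huv

lemma erase_subset_colorNbrs (hK : OmegaClique G α ξ a K) (hx : x ∈ K) :
    K.erase x ⊆ colorNbrs G ξ x a := by
  intro v hv
  rw [mem_erase] at hv
  exact mem_colorNbrs.mpr ⟨hK.adj hx hv.2 hv.1.symm, hK.color v hv.2⟩

lemma card_erase (hK : OmegaClique G α ξ a K) (hx : x ∈ K) : (K.erase x).card = α a := by
  rw [card_erase_of_mem hx, hK.isNClique.card_eq, Nat.add_sub_cancel]

lemma card_colorNbrs (h : Capacities G α) (hK : OmegaClique G α ξ a K) (hx : x ∈ K)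
    (b : Fin k) : (colorNbrs G ξ x b).card = α b := by
  have hpos : ∀ i, (0 : ℚ) < α i := fun i => by
    have := h.two_le i
    exact_mod_cast (by omega : 0 < α i)
  have hge : ∀ i, α i ≤ (colorNbrs G ξ x i).card := by
    intro i
    obtain ⟨R, hR⟩ := exists_Phi_update_eq G α ξ x
    have h1 := hR a
    rw [← hK.color x hx, update_eq_self, hK.color x hx] at h1
    have h2 := hK.Phi_le (update ξ x i)
    rw [hR i, h1] at h2
    have h3 : (1 : ℚ) ≤ ((colorNbrs G ξ x a).card : ℚ) / (α a : ℚ) := by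
      rw [le_div_iff₀ (hpos a), one_mul, ← hK.card_erase hx]
      exact_mod_cast card_le_card (hK.erase_subset_colorNbrs hx)
    have h4 : (1 : ℚ) ≤ ((colorNbrs G ξ x i).card : ℚ) / (α i : ℚ) := by linarith
    rw [le_div_iff₀ (hpos i), one_mul] at h4
    exact_mod_cast h4
  have hsum : ∑ i, α i = ∑ i, (colorNbrs G ξ x i).card :=
    le_antisymm (sum_le_sum fun i _ => hge i) (sum_card_colorNbrs (G := G) x ▸ h.degree_le x)
  exact ((sum_eq_sum_iff_of_le fun i _ => hge i).mp hsum b (mem_univ b)).symm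

lemma colorNbrs_eq (h : Capacities G α) (hK : OmegaClique G α ξ a K) (hx : x ∈ K) :
    K.erase x = colorNbrs G ξ x a :=
  eq_of_subset_of_card_le (hK.erase_subset_colorNbrs hx)
    (by rw [hK.card_colorNbrs h hx, hK.card_erase hx])

/-- A large clique is a connected component of its color class. -/
lemma mem_of_adj (h : Capacities G α) (hK : OmegaClique G α ξ a K) (hx : x ∈ K) {v : V}
    (hv : G.Adj x v) (hc : ξ v = a) : v ∈ K := by
  have : v ∈ K.erase x := hK.colorNbrs_eq h hx ▸ mem_colorNbrs.mpr ⟨hv, hc⟩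
  exact mem_of_mem_erase this

/-- Recoloring a vertex of a large clique creates a large clique in the new color, and the
coloring stays in `Ω`. -/
lemma update (h : Capacities G α) (hK : OmegaClique G α ξ a K) (hx : x ∈ K) (hab : b ≠ a) :
    OmegaClique G α (update ξ x b) b (insert x (colorNbrs G ξ x b)) := by
  set ξ' := Function.update ξ x b with hξ'
  set N := insert x (colorNbrs G ξ x b) with hN
  have hxN : x ∉ colorNbrs G ξ x b := fun hx' => (mem_colorNbrs.mp hx').1.ne rfl
  have hcardN : N.card = α b + 1 := by
    rw [hN, card_insert_of_notMem hxN, hK.card_colorNbrs h hx]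
  have hα : ∀ i, (α i : ℚ) ≠ 0 := fun i => by
    have := h.two_le i
    exact_mod_cast (by omega : α i ≠ 0)
  have hPhi : Phi G α ξ' = Phi G α ξ := by
    obtain ⟨R, hR⟩ := exists_Phi_update_eq G α ξ x
    have h1 := hR (ξ x)
    rw [update_eq_self] at h1
    rw [h1, hξ', hR b, hK.card_colorNbrs h hx, hK.card_colorNbrs h hx, div_self (hα _),
      div_self (hα _)]
  have hmin : ∀ ψ : V → Fin k, Phi G α ξ' ≤ Phi G α ψ := fun ψ => hPhi ▸ hK.Phi_le ψ
  have hKmem : K ∈ {s : Finset V | IsLargeClique G α ξ s} := ⟨a, hK.isNClique, hK.color⟩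
  have hsub : ∀ s, IsLargeClique G α ξ' s →
      s ∈ {s : Finset V | IsLargeClique G α ξ s} \ {K} ∨ (s = N ∧ G.IsNClique (α b + 1) s) := by
    rintro s ⟨i, hs, hc⟩
    by_cases hxs : x ∈ s
    · right
      have hi : i = b := by rw [← hc x hxs, hξ', update_self]
      subst hi
      refine ⟨eq_of_subset_of_card_le (fun v hv => ?_) (by rw [hcardN, hs.card_eq]), hs⟩
      rw [hN, mem_insert, mem_colorNbrs]
      by_cases hvx : v = x
      · exact Or.inl hvx
      · refine Or.inr ⟨hs.isClique hxs hv (Ne.symm hvx), ?_⟩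
        rw [← hc v hv, hξ', update_of_ne hvx]
    · left
      refine ⟨⟨i, hs, fun v hv => ?_⟩, ?_⟩
      · rw [← hc v hv, hξ', update_of_ne (by rintro rfl; exact hxs hv)]
      · rintro rfl
        exact hxs hx
  have hdiff := Set.ncard_sdiff_singleton_add_one hKmem (Set.toFinite _)
  have hclique : G.IsNClique (α b + 1) N := by
    by_contra hcl
    have hle : numLargeCliques G α ξ' ≤ ({s : Finset V | IsLargeClique G α ξ s} \ {K}).ncard := by
      refine Set.ncard_le_ncard (fun s hs => ?_) (Set.toFinite _)
      rcases hsub s hs with hs' | ⟨rfl, hs'⟩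
      · exact hs'
      · exact absurd hs' hcl
    have := hK.num_le ξ' hmin
    unfold numLargeCliques at this hle
    omega
  refine ⟨hmin, fun ψ hψ => le_trans ?_ (hK.num_le ψ hψ), hclique, ?_⟩
  · have hle : numLargeCliques G α ξ' ≤
        (insert N ({s : Finset V | IsLargeClique G α ξ s} \ {K})).ncard := by
      refine Set.ncard_le_ncard (fun s hs => ?_) (Set.toFinite _)
      rcases hsub s hs with hs' | ⟨rfl, -⟩
      · exact Or.inr hs'
      · exact Or.inl rfl
    have hins := Set.ncard_insert_le N ({s : Finset V | IsLargeClique G α ξ s} \ {K})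
    unfold numLargeCliques at hle ⊢
    omega
  · intro v hv
    rcases mem_insert.mp hv with rfl | hv
    · rw [hξ', update_self]
    · have hv := mem_colorNbrs.mp hv
      rw [hξ', update_of_ne hv.1.ne', hv.2]

/-- A vertex of another color adjacent to two vertices of a large clique is adjacent to all of
it. -/
lemma adj_of_adj_two (h : Capacities G α) (hK : OmegaClique G α ξ a K) (hab : b ≠ a)
    {u w v : V} (hu : u ∈ K) (hw : w ∈ K) (huw : u ≠ w) (hv : ξ v = b) (huv : G.Adj u v)
    (hwv : G.Adj w v) {z : V} (hz : z ∈ K) : G.Adj z v := by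
  by_cases hzu : z = u
  · exact hzu ▸ huv
  have hvK : ∀ y ∈ K, y ≠ v := by
    rintro y hy rfl
    exact hab (hv.symm.trans (hK.color y hy))
  have h1 := hK.update h hu hab
  have hv1 : v ∈ insert u (colorNbrs G ξ u b) :=
    mem_insert_of_mem (mem_colorNbrs.mpr ⟨huv, hv⟩)
  have h2 := h1.update h hv1 hab.symm
  have hcol : ∀ y ∈ K, y ≠ u → Function.update ξ u b y = a := by
    intro y hy hyu
    rw [update_of_ne hyu, hK.color y hy]
  have hw2 : w ∈ insert v (colorNbrs G (Function.update ξ u b) v a) :=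
    mem_insert_of_mem (mem_colorNbrs.mpr ⟨hwv.symm, hcol w hw huw.symm⟩)
  by_cases hzw : z = w
  · exact hzw ▸ hwv
  have hz2 := h2.mem_of_adj h hw2 (hK.adj hw hz (Ne.symm hzw))
    (by rw [update_of_ne (hvK z hz), hcol z hz hzu])
  rcases mem_insert.mp hz2 with hzv | hz2
  · exact absurd hzv (hvK z hz)
  · exact (mem_colorNbrs.mp hz2).1.symm

/-- If some vertex of color `b` has two neighbors in a large clique of another color, then all
vertices of the clique have the same neighbors of color `b`. -/
lemma adj_of_adj (h : Capacities G α) (hK : OmegaClique G α ξ a K) (hab : b ≠ a)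
    {u w v : V} (hu : u ∈ K) (hw : w ∈ K) (huw : u ≠ w) (hv : ξ v = b) (huv : G.Adj u v)
    (hwv : G.Adj w v) {y z v' : V} (hy : y ∈ K) (hz : z ∈ K) (hv' : ξ v' = b)
    (hyv' : G.Adj y v') : G.Adj z v' := by
  have hall : ∀ {t : V}, t ∈ K → G.Adj t v :=
    fun ht => hK.adj_of_adj_two h hab hu hw huw hv huv hwv ht
  by_cases hvv' : v = v'
  · exact hvv' ▸ hall hz
  have hvadj : G.Adj v v' :=
    (hK.update h hy hab).adj (mem_insert_of_mem (mem_colorNbrs.mpr ⟨hall hy, hv⟩))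
      (mem_insert_of_mem (mem_colorNbrs.mpr ⟨hyv', hv'⟩)) hvv'
  have hne : v' ≠ z := by
    rintro rfl
    exact hab (hv'.symm.trans (hK.color _ hz))
  have hmem := (hK.update h hz hab).mem_of_adj h
    (mem_insert_of_mem (mem_colorNbrs.mpr ⟨hall hz, hv⟩)) hvadj
    (by rw [update_of_ne hne, hv'])
  exact (mem_colorNbrs.mp ((mem_insert.mp hmem).resolve_left hne)).1

lemma exists_ne_ne (h : Capacities G α) (hK : OmegaClique G α ξ a K) (p q : V) :
    ∃ r ∈ K, r ≠ p ∧ r ≠ q := by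
  have hlt : ({p, q} : Finset V).card < K.card := by
    have := h.two_le a
    have := card_le_two (a := p) (b := q)
    rw [hK.isNClique.card_eq]
    omega
  obtain ⟨r, hr, hrn⟩ := exists_mem_notMem_of_card_lt_card hlt
  exact ⟨r, hr, by simpa [not_or] using hrn⟩

/-- A walk recoloring one vertex at a time between the colors `a` and `b` never revisits the set
`U` of vertices it has left behind, which is impossible in a finite graph. -/
lemma false_of_walk (h : Capacities G α) (n : ℕ) : ∀ (ξ : V → Fin k) (a b : Fin k)
    (K U : Finset V) (p : V), OmegaClique G α ξ a K → b ≠ a → p ∈ K → Disjoint K U →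
    (∀ u ∈ K, ∀ w ∈ K, u ≠ w → ∀ v, ξ v = b → G.Adj u v → ¬ G.Adj w v) →
    (∀ u ∈ U, ∀ v, v ∉ U → v ≠ p → ξ u ≠ ξ v → (ξ u = a ∨ ξ u = b) → (ξ v = a ∨ ξ v = b) →
      G.Adj u v → ∃ w ∈ U, ξ w = ξ u ∧ G.Adj u w ∧ ¬ G.Adj v w) →
    Uᶜ.card = n → False := by
  induction n using Nat.strong_induction_on with
  | _ n ih =>
  intro ξ a b K U p hK hab hp hdisj hsparse hU hn
  obtain ⟨x, hx, hxp, -⟩ := hK.exists_ne_ne h p p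
  have h1 := hK.update h hx hab
  have hKU : ∀ v ∈ K, v ∉ U := fun v hv hvU => disjoint_left.mp hdisj hv hvU
  refine ih (U ∪ K.erase x)ᶜ.card ?_ (Function.update ξ x b) b a _ (U ∪ K.erase x) x h1 hab.symm
    (mem_insert_self _ _) ?_ ?_ ?_ rfl
  · rw [← hn]
    refine card_lt_card ?_
    rw [ssubset_iff_of_subset (compl_subset_compl.mpr subset_union_left)]
    exact ⟨p, by simpa using hKU p hp, by simp [hp, hxp.symm]⟩
  · rw [disjoint_left]
    intro y hy hyU
    rcases mem_insert.mp hy with rfl | hyN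
    · simp [hKU y hx] at hyU
    have hyb := mem_colorNbrs.mp hyN
    rcases mem_union.mp hyU with hyU | hyK
    · obtain ⟨w, hwU, hwc, hyw, hxw⟩ := hU y hyU x (hKU x hx) hxp
        (by rw [hyb.2, hK.color x hx]; exact hab) (Or.inr hyb.2) (Or.inl (hK.color x hx))
        hyb.1.symm
      have hwx : w ≠ x := by
        rintro rfl
        exact hKU w hx hwU
      have hw := h1.mem_of_adj h hy hyw (by rw [update_of_ne hwx, hwc, hyb.2])
      exact hxw (mem_colorNbrs.mp ((mem_insert.mp hw).resolve_left hwx)).1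
    · exact hab (hyb.2.symm.trans (hK.color y (mem_of_mem_erase hyK)))
  · intro u hu w hw huw v hv huv hwv
    have hcard := hK.card_colorNbrs h hx b
    obtain ⟨y, hy⟩ : (colorNbrs G ξ x b).Nonempty := by
      rw [← card_pos, hcard]
      have := h.two_le b
      omega
    obtain ⟨r, hr, hrx, hrp⟩ := hK.exists_ne_ne h x p
    have hjoin : ∀ q ∈ K, q ≠ x → G.Adj y q := fun q hq hqx =>
      h1.adj_of_adj h hab.symm hu hw huw hv huv hwv (mem_insert_self _ _)
        (mem_insert_of_mem hy) (by rw [update_of_ne hqx, hK.color q hq])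
        (hK.adj hx hq hqx.symm)
    exact hsparse r hr p hp hrp y (mem_colorNbrs.mp hy).2 (hjoin r hr hrx).symm
      (hjoin p hp hxp.symm).symm
  · intro u hu v hv hvx hne huc hvc huv
    have hux : u ≠ x := by
      rintro rfl
      simp [hKU u hx] at hu
    rw [update_of_ne hux] at hne huc ⊢
    rw [update_of_ne hvx] at hne hvc
    simp only [mem_union, mem_erase, not_or, not_and] at hv
    have hvK : v ∉ K := hv.2 hvx
    rcases mem_union.mp hu with huU | huK
    · obtain ⟨w, hwU, hwc, huw, hvw⟩ := hU u huU v hv.1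
        (by rintro rfl; exact hvK hp) hne huc.symm hvc.symm huv
      refine ⟨w, mem_union_left _ hwU, ?_, huw, hvw⟩
      rw [update_of_ne (by rintro rfl; exact hKU w hx hwU), hwc]
    · have huK' := mem_of_mem_erase huK
      have hua := hK.color u huK'
      have hvb : ξ v = b := hvc.resolve_right fun hva => hne (hua.trans hva.symm)
      obtain ⟨w, hw, hwx, hwu⟩ := hK.exists_ne_ne h x u
      refine ⟨w, mem_union_right _ (mem_erase.mpr ⟨hwx, hw⟩), ?_, hK.adj huK' hw hwu.symm,
        fun hvw => hsparse u huK' w hw hwu.symm v hvb huv hvw.symm⟩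
      rw [update_of_ne hwx, hK.color w hw, hua]

/-- All vertices of a large clique have the same neighbors in every other color. -/
lemma adj_of_adj_color (h : Capacities G α) (hK : OmegaClique G α ξ a K) (hab : b ≠ a)
    {y z v : V} (hy : y ∈ K) (hz : z ∈ K) (hv : ξ v = b) (hyv : G.Adj y v) : G.Adj z v := by
  by_contra hzv
  refine false_of_walk h _ ξ a b K ∅ y hK hab hy (disjoint_empty_right _) ?_ (by simp) rfl
  intro u hu w hw huw t ht hut hwt
  exact hzv (hK.adj_of_adj h hab hu hw huw ht hut hwt hy hz hv hyv)

/-- The closed neighborhood of a vertex of a large clique is a clique. -/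
lemma isNClique_closedNeighborhood (h : Capacities G α) (hK : OmegaClique G α ξ a K)
    (hx : x ∈ K) : G.IsNClique (∑ i, α i + 1) (insert x (G.neighborFinset x)) := by
  have hfrom : ∀ u v, G.Adj x u → G.Adj x v → ξ u ≠ a → u ≠ v → G.Adj u v := by
    intro u v hu hv hua huv
    have h1 := hK.update h hx hua
    have hu1 : u ∈ insert x (colorNbrs G ξ x (ξ u)) :=
      mem_insert_of_mem (mem_colorNbrs.mpr ⟨hu, rfl⟩)
    by_cases hc : ξ v = ξ u
    · exact h1.adj hu1 (mem_insert_of_mem (mem_colorNbrs.mpr ⟨hv, hc⟩)) huv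
    · exact h1.adj_of_adj_color h hc (mem_insert_self _ _) hu1 (update_of_ne hv.ne' _ _) hv
  refine ⟨?_, ?_⟩
  · rw [coe_insert, SimpleGraph.isClique_insert]
    refine ⟨fun u hu v hv huv => ?_, fun v hv _ => by simpa using hv⟩
    rw [mem_coe, SimpleGraph.mem_neighborFinset] at hu hv
    by_cases hua : ξ u = a
    · by_cases hva : ξ v = a
      · exact hK.adj (hK.mem_of_adj h hx hu hua) (hK.mem_of_adj h hx hv hva) huv
      · exact (hfrom v u hv hu hva huv.symm).symm
    · exact hfrom u v hu hv hua huv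
  · rw [card_insert_of_notMem (by simp), SimpleGraph.card_neighborFinset_eq_degree,
      ← sum_card_colorNbrs (ξ := ξ)]
    simp only [hK.card_colorNbrs h hx]

end OmegaClique

end LargeCliques

/-- **Proposition 5 / Theorem 2.** No coloring in `Ω` has a large clique:
there is a `Φ`-minimizing coloring with no large clique, and every `Φ`-minimizing coloring
which (among `Φ`-minimizers) has the fewest large cliques has zero large cliques. -/
theorem omega_colorings_have_no_large_cliques {V : Type*} [Fintype V] [DecidableEq V]
    (G : SimpleGraph V) [DecidableRel G.Adj] (D c : ℕ)
    (α : Fin (c + 1) → ℕ) (hα : ∀ i, 2 ≤ α i) (hsum : ∑ i, α i = D)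
    (hdeg : ∀ v : V, G.degree v ≤ D) (hfree : G.CliqueFree (D + 1)) :
    (∃ ξ : V → Fin (c + 1),
      (∀ ψ : V → Fin (c + 1), Phi G α ξ ≤ Phi G α ψ) ∧
      ∀ s : Finset V, ¬ IsLargeClique G α ξ s) ∧
    (∀ ξ : V → Fin (c + 1),
      (∀ ψ : V → Fin (c + 1), Phi G α ξ ≤ Phi G α ψ) →
      (∀ ψ : V → Fin (c + 1), (∀ χ : V → Fin (c + 1), Phi G α ψ ≤ Phi G α χ) →
        numLargeCliques G α ξ ≤ numLargeCliques G α ψ) →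
      numLargeCliques G α ξ = 0) := by
  have h : Capacities G α := ⟨hα, fun v => hsum ▸ hdeg v⟩
  have hzero : ∀ ξ : V → Fin (c + 1),
      (∀ ψ : V → Fin (c + 1), Phi G α ξ ≤ Phi G α ψ) →
      (∀ ψ : V → Fin (c + 1), (∀ χ : V → Fin (c + 1), Phi G α ψ ≤ Phi G α χ) →
        numLargeCliques G α ξ ≤ numLargeCliques G α ψ) →
      ∀ s : Finset V, ¬ IsLargeClique G α ξ s := by
    rintro ξ hΦ hφ s ⟨a, hs, hc⟩
    have hK : OmegaClique G α ξ a s := ⟨hΦ, hφ, hs, hc⟩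
    obtain ⟨x, hx⟩ : s.Nonempty := by
      rw [← Finset.card_pos, hs.card_eq]
      omega
    exact hfree _ (hsum ▸ hK.isNClique_closedNeighborhood h hx)
  refine ⟨?_, fun ξ hΦ hφ => ?_⟩
  · obtain ⟨ξ₀, hξ₀⟩ := Finite.exists_min (Phi G α)
    obtain ⟨ξ, hΦ, hφ⟩ := Set.exists_min_image
      {ψ : V → Fin (c + 1) | ∀ χ : V → Fin (c + 1), Phi G α ψ ≤ Phi G α χ}
      (numLargeCliques G α) (Set.toFinite _) ⟨ξ₀, hξ₀⟩
    exact ⟨ξ, hΦ, hzero ξ hΦ hφ⟩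
  · rw [numLargeCliques, Set.ncard_eq_zero (Set.toFinite _)]
    exact Set.eq_empty_of_forall_notMem (hzero ξ hΦ hφ)
end
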